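/- arXiv:1504.08282 — 3 statements merged into one kernel-verified Lean document; each statement's English description precedes it below -/
import Mathlib

section
/- Let Λ be an artin algebra and P the class of finitely generated right Λ-modules of finite projective dimension. If P is contravariantly finite in mod Λ, then the direct sum E of a complete set of representatives of the isomorphism classes of indecomposable Ext-injective modules in P is a tilting Λ-module. -/
open CategoryTheory

universe u

/-- The `n`-th Ext group of `A`-modules `M`, `N`. -/
noncomputable abbrev ext {A : Type u} [Ring A] (M N : ModuleCat.{u} A) (n : ℕ) : Type u :=
  ((Ext ℤ (ModuleCat.{u} A) n).obj (Opposite.op M)).obj N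

/-- `Ext^i(N, M) = 0` for all `i > 0`. -/
def ExtVanish {A : Type u} [Ring A] (N M : ModuleCat.{u} A) : Prop :=
  ∀ i, 0 < i → Subsingleton (ext N M i)

/-- `M` has projective dimension at most `n`, i.e. `Ext^i(M, -) = 0` for `i > n`. -/
def pdLE {A : Type u} [Ring A] (M : ModuleCat.{u} A) (n : ℕ) : Prop :=
  ∀ i, n < i → ∀ N : ModuleCat.{u} A, Subsingleton (ext M N i)

/-- The projective dimension of `M`, as an element of `ℕ∞` (`⊤` if infinite). -/
noncomputable def projDim {A : Type u} [Ring A] (M : ModuleCat.{u} A) : ℕ∞ :=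
  sInf {d : ℕ∞ | ∃ n : ℕ, d = n ∧ pdLE M n}

/-- Membership in `𝒫`: finitely generated of finite projective dimension. -/
def InP {A : Type u} [Ring A] (M : ModuleCat.{u} A) : Prop :=
  Module.Finite A M ∧ ∃ n, pdLE M n

/-- The finitistic dimension of `A`. -/
noncomputable def findim (A : Type u) [Ring A] : ℕ∞ :=
  sSup {d : ℕ∞ | ∃ M : ModuleCat.{u} A, InP M ∧ d = projDim M}

/-- `M` is a direct summand of `S`. -/
def IsSummand {A : Type u} [Ring A] (M S : ModuleCat.{u} A) : Prop :=
  ∃ (s : M →ₗ[A] S) (r : S →ₗ[A] M), r ∘ₗ s = LinearMap.id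

/-- `M` belongs to `add 𝒳`: `M` is a direct summand of a finite direct sum of objects of `𝒳`. -/
def InAddOf {A : Type u} [Ring A] (X : ModuleCat.{u} A → Prop) (M : ModuleCat.{u} A) : Prop :=
  ∃ (k : ℕ) (F : Fin k → ModuleCat.{u} A), (∀ i, X (F i)) ∧
    IsSummand M (ModuleCat.of A (DirectSum (Fin k) (fun i => ↥(F i))))

/-- `M` belongs to `Add T`: `M` is a direct summand of an arbitrary direct sum of copies of `T`. -/
def InAdd {A : Type u} [Ring A] (T M : ModuleCat.{u} A) : Prop :=
  ∃ ι : Type u, IsSummand M (ModuleCat.of A (DirectSum ι (fun _ => ↥T)))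

/-- `M ∈ 𝒳^⊥`: `Ext^i(N, M) = 0` for all `N ∈ 𝒳` and `i > 0`. -/
def InPerpOf {A : Type u} [Ring A] (X : ModuleCat.{u} A → Prop) (M : ModuleCat.{u} A) : Prop :=
  ∀ N, X N → ExtVanish N M

/-- `M` is Ext-injective in `𝒫`: `M ∈ 𝒫` and `Ext^1(N, M) = 0` for all `N ∈ 𝒫`. -/
def ExtInjInP {A : Type u} [Ring A] (M : ModuleCat.{u} A) : Prop :=
  InP M ∧ ∀ N : ModuleCat.{u} A, InP N → Subsingleton (ext N M 1)

/-- `M` is splitting injective in `𝒳`: every injective map `M → Y` with `Y ∈ add 𝒳` splits. -/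
def SplittingInjIn {A : Type u} [Ring A] (X : ModuleCat.{u} A → Prop)
    (M : ModuleCat.{u} A) : Prop :=
  ∀ Y : ModuleCat.{u} A, InAddOf X Y → ∀ f : M →ₗ[A] Y, Function.Injective f →
    ∃ r : Y →ₗ[A] M, r ∘ₗ f = LinearMap.id

/-- `0 → M₁ → M₂ → M₃ → 0` is a short exact sequence. -/
def ShortExact {A : Type u} [Ring A] {M₁ M₂ M₃ : ModuleCat.{u} A}
    (f : M₁ →ₗ[A] M₂) (g : M₂ →ₗ[A] M₃) : Prop :=
  Function.Injective f ∧ Function.Exact f g ∧ Function.Surjective g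

/-- `f : XM → M` is a right `𝒳`-approximation of `M`. -/
def IsRightApprox {A : Type u} [Ring A] (X : ModuleCat.{u} A → Prop)
    {XM M : ModuleCat.{u} A} (f : XM →ₗ[A] M) : Prop :=
  X XM ∧ ∀ Y : ModuleCat.{u} A, X Y → ∀ g : Y →ₗ[A] M, ∃ h : Y →ₗ[A] XM, f ∘ₗ h = g

/-- `f : XM → M` is a minimal right `𝒳`-approximation. -/
def IsMinimalRightApprox {A : Type u} [Ring A] (X : ModuleCat.{u} A → Prop)
    {XM M : ModuleCat.{u} A} (f : XM →ₗ[A] M) : Prop :=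
  IsRightApprox X f ∧ ∀ g : XM →ₗ[A] XM, f ∘ₗ g = f → Function.Bijective g

/-- `𝒳` is contravariantly finite in `mod A`. -/
def ContravariantlyFinite {A : Type u} [Ring A] (X : ModuleCat.{u} A → Prop) : Prop :=
  ∀ M : ModuleCat.{u} A, Module.Finite A M →
    ∃ (XM : ModuleCat.{u} A) (f : XM →ₗ[A] M), IsRightApprox X f

/-- `M` is an indecomposable module: nonzero, and its only idempotent endomorphisms
are `0` and the identity. -/
def Indec {A : Type u} [Ring A] (M : ModuleCat.{u} A) : Prop :=
  (¬ Subsingleton M) ∧ ∀ e : M →ₗ[A] M, e ∘ₗ e = e → e = 0 ∨ e = LinearMap.id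

/-- `L` admits a finite coresolution `0 → L → C^0 → ⋯ → C^n → 0` with all `C^i ∈ add T`. -/
def HasAddCoresolution {A : Type u} [Ring A] (T L : ModuleCat.{u} A) : Prop :=
  ∃ (C : ℕ → ModuleCat.{u} A) (d : ∀ i, C i →ₗ[A] C (i+1)) (f : L →ₗ[A] C 0),
    Function.Injective f ∧ Function.Exact f (d 0) ∧
    (∀ i, Function.Exact (d i) (d (i+1))) ∧
    (∀ i, InAddOf (fun X => X = T) (C i)) ∧
    (∃ m, ∀ i, m ≤ i → Subsingleton (C i))

/-- `T` is a tilting `A`-module. -/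
def IsTilting {A : Type u} [Ring A] (T : ModuleCat.{u} A) : Prop :=
  Module.Finite A T ∧ (∃ n, pdLE T n) ∧ ExtVanish T T ∧
    HasAddCoresolution T (ModuleCat.of A A)

/-- `𝒳` is a resolving subcategory of `mod A`. -/
def Resolving {A : Type u} [Ring A] (X : ModuleCat.{u} A → Prop) : Prop :=
  (∀ M : ModuleCat.{u} A, Module.Finite A M → Module.Projective A M → X M) ∧
  (∀ (M₁ M₂ M₃ : ModuleCat.{u} A) (f : M₁ →ₗ[A] M₂) (g : M₂ →ₗ[A] M₃),
      ShortExact f g → X M₁ → X M₃ → X M₂) ∧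
  (∀ (M₁ M₂ M₃ : ModuleCat.{u} A) (f : M₁ →ₗ[A] M₂) (g : M₂ →ₗ[A] M₃),
      ShortExact f g → X M₂ → X M₃ → X M₁)

/-- `F` is a complete irredundant family of representatives of the isomorphism classes of
indecomposable Ext-injective modules in `𝒫`. -/
def IsCompleteExtInjFamily {A : Type u} [Ring A] {ι : Type u}
    (F : ι → ModuleCat.{u} A) : Prop :=
  (∀ i, Indec (F i) ∧ ExtInjInP (F i)) ∧
  (∀ M : ModuleCat.{u} A, Indec M → ExtInjInP M → ∃ i, Nonempty (M ≃ₗ[A] F i)) ∧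
  (∀ i j, Nonempty (F i ≃ₗ[A] F j) → i = j)

/-- `I` is a complete set of pairwise non-isomorphic indecomposable injective modules. -/
def IsCompleteIndecInjFamily {A : Type u} [Ring A] {n : ℕ}
    (I : Fin n → ModuleCat.{u} A) : Prop :=
  (∀ j, Module.Finite A (I j) ∧ Module.Injective A (I j) ∧ Indec (I j)) ∧
  (∀ M : ModuleCat.{u} A, Module.Finite A M → Module.Injective A M → Indec M →
      ∃ j, Nonempty (M ≃ₗ[A] I j)) ∧
  (∀ j k, Nonempty (I j ≃ₗ[A] I k) → j = k)

/-!
Let `X → I` be the minimal right `𝒫`-approximation of a finitely generated injective cogenerator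
`I`. By Wakamatsu's lemma its kernel is right orthogonal to `𝒫`, so `X` is Ext-injective, and every
object of `𝒫` embeds into a power of `X`. Since `𝒫` is closed under cokernels of monomorphisms,
every Ext-injective module is therefore a direct summand of a power of `X`, and by Krull–Schmidt
there are only finitely many indecomposable ones; their sum `E` generates the same additive
subcategory as `X`.

Special approximations can be glued along short exact sequences. Filtering a module by simple
modules, every `N ∈ 𝒫` is thus a summand of an iterated extension of the approximations of the
simple modules, which bounds the projective dimension on `𝒫` by some `d`. Embedding the regular
module into a power of `X` and passing to cosyzygies, all of which stay in `𝒫`, the `d`-th one is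
Ext-injective by dimension shifting. This yields the coresolution of the regular module by `add E`.
-/

section Ext

variable {A : Type u} [Ring A]

/-- `Ext^i(N, K) = 0`, for the derived-category `Ext` groups of Mathlib, which carry the long exact
sequences. -/
abbrev ExtZero (N K : ModuleCat.{u} A) (i : ℕ) : Prop := Subsingleton (Abelian.Ext.{u} N K i)

lemma subsingleton_ext_succ_iff (M N : ModuleCat.{u} A) (n : ℕ) :
    Subsingleton (ext M N (n + 1)) ↔ ExtZero M N (n + 1) := by
  let P := projectiveResolution M
  -- Both groups are the cohomology of the complex `Hom(P, N)`.
  have ext_iff : Subsingleton (ext M N (n + 1)) ↔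
      ∀ f : P.complex.X (n + 1) ⟶ N, P.complex.d (n + 2) (n + 1) ≫ f = 0 →
        ∃ g : P.complex.X n ⟶ N, P.complex.d (n + 1) n ≫ g = f := by
    rw [← ModuleCat.isZero_iff_subsingleton, (P.isoExt (R := ℤ) (n + 1) N).isZero_iff,
      ← HomologicalComplex.exactAt_iff_isZero_homology,
      HomologicalComplex.exactAt_iff' _ n (n + 1) (n + 2) (by simp) (by simp),
      ShortComplex.moduleCat_exact_iff]
    rfl
  rw [ext_iff]
  constructor
  · refine fun h => subsingleton_of_forall_eq 0 fun x => ?_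
    obtain ⟨f, hf, rfl⟩ := P.extMk_surjective x (n + 2) rfl
    exact (P.extMk_eq_zero_iff f (n + 2) rfl hf n rfl).2 (h f hf)
  · exact fun h f hf => (P.extMk_eq_zero_iff f (n + 2) rfl hf n rfl).1 (h.elim _ _)

lemma pdLE_iff_hasProjectiveDimensionLT (M : ModuleCat.{u} A) (n : ℕ) :
    pdLE M n ↔ HasProjectiveDimensionLT M (n + 1) := by
  rw [hasProjectiveDimensionLT_iff.{u}]
  constructor
  · rintro h (_ | j) hj N e
    · omega
    · exact ((subsingleton_ext_succ_iff M N j).1 (h (j + 1) (by omega) N)).elim _ _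
  · rintro h (_ | j) hj N
    · omega
    · refine (subsingleton_ext_succ_iff M N j).2 (subsingleton_of_forall_eq 0 fun e => ?_)
      exact h (j + 1) (by omega) e

lemma extVanish_iff {N M : ModuleCat.{u} A} : ExtVanish N M ↔ ∀ i, ExtZero N M (i + 1) := by
  refine ⟨fun h i => (subsingleton_ext_succ_iff N M i).1 (h _ i.succ_pos), fun h => ?_⟩
  rintro (_ | i) hi
  · omega
  · exact (subsingleton_ext_succ_iff N M i).2 (h i)

lemma extZero_of_projective (P K : ModuleCat.{u} A) [Module.Projective A P] (i : ℕ) :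
    ExtZero P K (i + 1) := by
  have := (IsProjective.iff_projective P).1 ‹_›
  exact subsingleton_of_forall_eq 0 Abelian.Ext.eq_zero_of_projective

lemma extZero_of_injective (N I : ModuleCat.{u} A) [Module.Injective A I] (i : ℕ) :
    ExtZero N I (i + 1) := by
  have := (Module.injective_iff_injective_object A I).1 ‹_›
  exact subsingleton_of_forall_eq 0 Abelian.Ext.eq_zero_of_injective

variable {M₁ M₂ M₃ : ModuleCat.{u} A} {f : M₁ →ₗ[A] M₂} {g : M₂ →ₗ[A] M₃}

lemma shortExact_ker (hg : Function.Surjective g) :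
    ShortExact (M₁ := ModuleCat.of A (LinearMap.ker g)) (LinearMap.ker g).subtype g :=
  ⟨Subtype.val_injective, LinearMap.exact_subtype_ker_map g, hg⟩

lemma shortExact_quotient (hf : Function.Injective f) :
    ShortExact (M₃ := ModuleCat.of A (M₂ ⧸ LinearMap.range f)) f (LinearMap.range f).mkQ :=
  ⟨hf, LinearMap.exact_map_mkQ_range f, Submodule.mkQ_surjective _⟩

namespace ShortExact

lemma exists_comp_eq {N : ModuleCat.{u} A} (h : ShortExact f g) {φ : N →ₗ[A] M₂}
    (hφ : g ∘ₗ φ = 0) : ∃ ψ : N →ₗ[A] M₁, f ∘ₗ ψ = φ := by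
  let e := LinearEquiv.ofInjective f h.1
  have hmem : ∀ x, φ x ∈ LinearMap.range f := fun x => (h.2.1 _).1 (LinearMap.congr_fun hφ x)
  exact ⟨e.symm.toLinearMap ∘ₗ φ.codRestrict _ hmem,
    LinearMap.ext fun x => congrArg Subtype.val (e.apply_symm_apply ⟨φ x, hmem x⟩)⟩

/-- A short exact sequence, as a short complex in `ModuleCat A`. -/
abbrev shortComplex (h : ShortExact f g) : ShortComplex (ModuleCat.{u} A) :=
  ShortComplex.mk (ModuleCat.ofHom f) (ModuleCat.ofHom g)
    (ModuleCat.hom_ext (LinearMap.ext h.2.1.apply_apply_eq_zero))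

lemma shortExact_shortComplex (h : ShortExact f g) : h.shortComplex.ShortExact where
  exact := (ShortComplex.moduleCat_exact_iff_range_eq_ker _).2 h.2.1.linearMap_ker_eq.symm
  mono_f := (ModuleCat.mono_iff_injective _).2 h.1
  epi_g := (ModuleCat.epi_iff_surjective _).2 h.2.2

variable {N K : ModuleCat.{u} A} {i : ℕ}

lemma extZero_mid_right (h : ShortExact f g) (h₁ : ExtZero N M₁ i) (h₃ : ExtZero N M₃ i) :
    ExtZero N M₂ i := by
  refine subsingleton_of_forall_eq 0 fun x => ?_
  obtain ⟨y, rfl⟩ := Abelian.Ext.covariant_sequence_exact₂ N h.shortExact_shortComplex x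
    (h₃.elim _ _)
  rw [h₁.elim y 0, Abelian.Ext.zero_comp]

lemma extZero_right_right (h : ShortExact f g) (h₂ : ExtZero N M₂ i)
    (h₁ : ExtZero N M₁ (i + 1)) : ExtZero N M₃ i := by
  refine subsingleton_of_forall_eq 0 fun x => ?_
  obtain ⟨y, rfl⟩ := Abelian.Ext.covariant_sequence_exact₃ N h.shortExact_shortComplex x rfl
    (h₁.elim _ _)
  rw [h₂.elim y 0, Abelian.Ext.zero_comp]

lemma extZero_left_left (h : ShortExact f g) (h₂ : ExtZero M₂ K i)
    (h₃ : ExtZero M₃ K (i + 1)) : ExtZero M₁ K i := by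
  refine subsingleton_of_forall_eq 0 fun x => ?_
  obtain ⟨y, rfl⟩ := Abelian.Ext.contravariant_sequence_exact₁ h.shortExact_shortComplex K x
    (add_comm 1 i) (h₃.elim _ _)
  rw [h₂.elim y 0, Abelian.Ext.comp_zero]

lemma extZero_right_left (h : ShortExact f g) (h₁ : ExtZero M₁ K i)
    (h₂ : ExtZero M₂ K (i + 1)) : ExtZero M₃ K (i + 1) := by
  refine subsingleton_of_forall_eq 0 fun x => ?_
  obtain ⟨y, rfl⟩ := Abelian.Ext.contravariant_sequence_exact₃ h.shortExact_shortComplex K x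
    (h₂.elim _ _) (add_comm 1 i)
  rw [h₁.elim y 0, Abelian.Ext.comp_zero]

lemma exists_lift (h : ShortExact f g) (h₁ : ExtZero N M₁ 1) (φ : N →ₗ[A] M₃) :
    ∃ ψ : N →ₗ[A] M₂, g ∘ₗ ψ = φ := by
  obtain ⟨y, hy⟩ := Abelian.Ext.covariant_sequence_exact₃ N h.shortExact_shortComplex
    (Abelian.Ext.mk₀ (ModuleCat.ofHom φ)) rfl (h₁.elim _ _)
  obtain ⟨ψ, rfl⟩ := (Abelian.Ext.mk₀_bijective _ _).2 y
  rw [Abelian.Ext.mk₀_comp_mk₀] at hy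
  exact ⟨ψ.hom, congrArg ModuleCat.Hom.hom ((Abelian.Ext.mk₀_bijective _ _).1 hy)⟩

lemma exists_extend (h : ShortExact f g) (h₃ : ExtZero M₃ K 1) (φ : M₁ →ₗ[A] K) :
    ∃ ψ : M₂ →ₗ[A] K, ψ ∘ₗ f = φ := by
  obtain ⟨y, hy⟩ := Abelian.Ext.contravariant_sequence_exact₁ h.shortExact_shortComplex K
    (Abelian.Ext.mk₀ (ModuleCat.ofHom φ)) rfl (h₃.elim _ _)
  obtain ⟨ψ, rfl⟩ := (Abelian.Ext.mk₀_bijective _ _).2 y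
  rw [Abelian.Ext.mk₀_comp_mk₀] at hy
  exact ⟨ψ.hom, congrArg ModuleCat.Hom.hom ((Abelian.Ext.mk₀_bijective _ _).1 hy)⟩

lemma extZero_one_of_forall_exists_extend (h : ShortExact f g) [Module.Projective A M₂]
    (hext : ∀ φ : M₁ →ₗ[A] K, ∃ ψ : M₂ →ₗ[A] K, ψ ∘ₗ f = φ) : ExtZero M₃ K 1 := by
  refine subsingleton_of_forall_eq 0 fun x => ?_
  obtain ⟨y, rfl⟩ := Abelian.Ext.contravariant_sequence_exact₃ h.shortExact_shortComplex K x
    ((extZero_of_projective M₂ K 0).elim _ _) (add_comm 1 0)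
  obtain ⟨φ, rfl⟩ := (Abelian.Ext.mk₀_bijective _ _).2 y
  obtain ⟨ψ, hψ⟩ := hext φ.hom
  have factor : φ = ModuleCat.ofHom f ≫ ModuleCat.ofHom ψ := ModuleCat.hom_ext hψ.symm
  rw [factor, ← Abelian.Ext.mk₀_comp_mk₀, h.shortExact_shortComplex.extClass_comp_assoc]

end ShortExact

end Ext

section Summands

variable {A : Type u} [Ring A]

namespace IsSummand

variable {L M N S : ModuleCat.{u} A}

lemma of_linearEquiv (e : M ≃ₗ[A] N) : IsSummand M N :=
  ⟨e.toLinearMap, e.symm.toLinearMap, LinearMap.ext e.symm_apply_apply⟩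

lemma trans (h : IsSummand L M) (h' : IsSummand M N) : IsSummand L N := by
  obtain ⟨s, r, h⟩ := h
  obtain ⟨s', r', h'⟩ := h'
  refine ⟨s' ∘ₗ s, r ∘ₗ r', LinearMap.ext fun x => ?_⟩
  exact (congrArg r (LinearMap.congr_fun h' (s x))).trans (LinearMap.congr_fun h x)

lemma pi {κ : Type} {M N : κ → ModuleCat.{u} A} (h : ∀ k, IsSummand (M k) (N k)) :
    IsSummand (ModuleCat.of A (∀ k, M k)) (ModuleCat.of A (∀ k, N k)) := by
  choose s r h using h
  exact ⟨LinearMap.pi fun k => s k ∘ₗ LinearMap.proj k,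
    LinearMap.pi fun k => r k ∘ₗ LinearMap.proj k,
    LinearMap.ext fun x => funext fun k => LinearMap.congr_fun (h k) (x k)⟩

lemma of_isCompl {N N' : Submodule A M} (h : IsCompl N N') : IsSummand (ModuleCat.of A N) M :=
  ⟨N.subtype, N.projectionOnto N' h, LinearMap.ext fun x => by simp⟩

lemma finite (h : IsSummand M S) (hS : Module.Finite A S) : Module.Finite A M := by
  obtain ⟨s, r, h⟩ := h
  exact Module.Finite.of_surjective r fun x => ⟨s x, LinearMap.congr_fun h x⟩

/-- A direct summand, as a retract in `ModuleCat A`. -/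
def retract {s : M →ₗ[A] S} {r : S →ₗ[A] M} (h : r ∘ₗ s = LinearMap.id) : Retract M S where
  i := ModuleCat.ofHom s
  r := ModuleCat.ofHom r
  retract := ModuleCat.hom_ext h

lemma hasProjectiveDimensionLT (h : IsSummand M S) {n : ℕ} (hS : HasProjectiveDimensionLT S n) :
    HasProjectiveDimensionLT M n := by
  obtain ⟨s, r, h⟩ := h
  exact (retract h).hasProjectiveDimensionLT n

lemma extZero (h : IsSummand M S) {i : ℕ} (hS : ExtZero N S i) : ExtZero N M i := by
  obtain ⟨s, r, h⟩ := h
  refine subsingleton_of_forall_eq 0 fun x => ?_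
  calc x = (x.comp (Abelian.Ext.mk₀ (ModuleCat.ofHom s)) (add_zero i)).comp
        (Abelian.Ext.mk₀ (ModuleCat.ofHom r)) (add_zero i) := by
        rw [Abelian.Ext.comp_assoc_of_third_deg_zero, Abelian.Ext.mk₀_comp_mk₀,
          show ModuleCat.ofHom s ≫ ModuleCat.ofHom r = 𝟙 M from (retract h).retract,
          Abelian.Ext.comp_mk₀_id]
    _ = 0 := by rw [hS.elim (x.comp _ _) 0, Abelian.Ext.zero_comp]

end IsSummand

end Summands

section Pushout

variable {A : Type u} [Ring A] {M₁ M₂ M₃ X Y : ModuleCat.{u} A}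

/-- The pushout of `l : M₁ → X` and `f : M₁ → M₂`, as a quotient of `X × M₂`. -/
abbrev LinearPushout (l : M₁ →ₗ[A] X) (f : M₁ →ₗ[A] M₂) : ModuleCat.{u} A :=
  ModuleCat.of A ((X × M₂) ⧸ LinearMap.range (l.prod (-f)))

namespace LinearPushout

section

variable (l : M₁ →ₗ[A] X) (f : M₁ →ₗ[A] M₂)

/-- The canonical map from the first module to the pushout. -/
def inl : X →ₗ[A] LinearPushout l f :=
  (LinearMap.range (l.prod (-f))).mkQ ∘ₗ LinearMap.inl A X M₂

/-- The canonical map from the second module to the pushout. -/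
def inr : M₂ →ₗ[A] LinearPushout l f :=
  (LinearMap.range (l.prod (-f))).mkQ ∘ₗ LinearMap.inr A X M₂

end

variable {l : M₁ →ₗ[A] X} {f : M₁ →ₗ[A] M₂}

lemma inl_add_inr (x : X) (y : M₂) :
    inl l f x + inr l f y = (LinearMap.range (l.prod (-f))).mkQ (x, y) := by
  rw [inl, inr, LinearMap.comp_apply, LinearMap.comp_apply, ← map_add, LinearMap.inl_apply,
    LinearMap.inr_apply, Prod.mk_add_mk, add_zero, zero_add]

lemma exists_inl_add_inr (v : LinearPushout l f) : ∃ x y, inl l f x + inr l f y = v := by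
  obtain ⟨⟨x, y⟩, rfl⟩ := Submodule.mkQ_surjective _ v
  exact ⟨x, y, inl_add_inr x y⟩

lemma inl_add_inr_eq_zero_iff {x : X} {y : M₂} :
    inl l f x + inr l f y = 0 ↔ ∃ z, l z = x ∧ -f z = y := by
  rw [inl_add_inr, ← LinearMap.mem_ker, Submodule.ker_mkQ]
  simp

lemma inl_comp : inl l f ∘ₗ l = inr l f ∘ₗ f := by
  refine LinearMap.ext fun z => sub_eq_zero.1 ?_
  simpa [sub_eq_add_neg] using (inl_add_inr_eq_zero_iff (l := l) (f := f)).2 ⟨z, rfl, rfl⟩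

lemma hom_ext {c d : LinearPushout l f →ₗ[A] Y} (h_inl : c ∘ₗ inl l f = d ∘ₗ inl l f)
    (h_inr : c ∘ₗ inr l f = d ∘ₗ inr l f) : c = d := by
  refine LinearMap.ext fun v => ?_
  obtain ⟨x, y, rfl⟩ := exists_inl_add_inr v
  rw [map_add, map_add]
  exact congrArg₂ (· + ·) (LinearMap.congr_fun h_inl x) (LinearMap.congr_fun h_inr y)

/-- The map out of the pushout induced by a commutative square. -/
def desc (s : X →ₗ[A] Y) (t : M₂ →ₗ[A] Y) (h : s ∘ₗ l = t ∘ₗ f) : LinearPushout l f →ₗ[A] Y :=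
  Submodule.liftQ _ (s.coprod t) (by
    rintro _ ⟨z, rfl⟩
    simpa [sub_eq_zero, ← sub_eq_add_neg] using LinearMap.congr_fun h z)

variable {s : X →ₗ[A] Y} {t : M₂ →ₗ[A] Y} (h : s ∘ₗ l = t ∘ₗ f)

lemma desc_inl : desc s t h ∘ₗ inl l f = s := by
  ext; simp [desc, inl]

lemma desc_inr : desc s t h ∘ₗ inr l f = t := by
  ext; simp [desc, inr]

lemma desc_inl_add_inr (x : X) (y : M₂) : desc s t h (inl l f x + inr l f y) = s x + t y :=
  (map_add _ _ _).trans
    (congrArg₂ (· + ·) (LinearMap.congr_fun (desc_inl h) x)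
      (LinearMap.congr_fun (desc_inr h) y))

end LinearPushout

lemma ShortExact.pushout {f : M₁ →ₗ[A] M₂} {g : M₂ →ₗ[A] M₃} (h : ShortExact f g)
    (l : M₁ →ₗ[A] X) : ShortExact (LinearPushout.inl l f)
      (LinearPushout.desc 0 g (by rw [LinearMap.zero_comp, h.2.1.linearMap_comp_eq_zero])) := by
  have hcomp : 0 ∘ₗ l = g ∘ₗ f := by rw [LinearMap.zero_comp, h.2.1.linearMap_comp_eq_zero]
  refine ⟨?_, fun v => ⟨fun hv => ?_, ?_⟩, fun m => ?_⟩
  · refine (injective_iff_map_eq_zero _).2 fun x hx => ?_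
    obtain ⟨z, rfl, hz⟩ := LinearPushout.inl_add_inr_eq_zero_iff.1
      (by rw [hx, map_zero, add_zero] : LinearPushout.inl l f x + LinearPushout.inr l f 0 = 0)
    rw [(map_eq_zero_iff f h.1).1 (neg_eq_zero.1 hz), map_zero]
  · obtain ⟨x, y, rfl⟩ := LinearPushout.exists_inl_add_inr v
    have hgy : g y = 0 :=
      (zero_add _).symm.trans ((LinearPushout.desc_inl_add_inr hcomp x y).symm.trans hv)
    obtain ⟨z, rfl⟩ := (h.2.1 y).1 hgy
    refine ⟨x + l z, ?_⟩
    rw [map_add]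
    exact congrArg _ (LinearMap.congr_fun LinearPushout.inl_comp z)
  · rintro ⟨x, rfl⟩
    exact LinearMap.congr_fun (LinearPushout.desc_inl hcomp) x
  · obtain ⟨y, rfl⟩ := h.2.2 m
    exact ⟨LinearPushout.inr l f y, LinearMap.congr_fun (LinearPushout.desc_inr hcomp) y⟩

end Pushout

section Resolving

variable {A : Type u} [Ring A] {𝒳 : ModuleCat.{u} A → Prop}

/-- `𝒳` is closed under extensions. -/
def ExtensionClosed (𝒳 : ModuleCat.{u} A → Prop) : Prop :=
  ∀ (M₁ M₂ M₃ : ModuleCat.{u} A) (f : M₁ →ₗ[A] M₂) (g : M₂ →ₗ[A] M₃),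
    ShortExact f g → 𝒳 M₁ → 𝒳 M₃ → 𝒳 M₂

/-- `𝒳` is closed under direct summands. -/
def SummandClosed (𝒳 : ModuleCat.{u} A → Prop) : Prop :=
  ∀ M S : ModuleCat.{u} A, 𝒳 S → IsSummand M S → 𝒳 M

/-- `K` lies in the right orthogonal of `𝒳` with respect to `Ext^1`: `Ext^1(N, K) = 0` for all
`N ∈ 𝒳`. -/
def InPerpOne (𝒳 : ModuleCat.{u} A → Prop) (K : ModuleCat.{u} A) : Prop :=
  ∀ N, 𝒳 N → ExtZero N K 1

lemma inPerpOne_of_subsingleton (𝒳 : ModuleCat.{u} A → Prop) (K : ModuleCat.{u} A)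
    [Subsingleton K] : InPerpOne 𝒳 K := by
  have := (ModuleCat.isZero_of_subsingleton K).injective
  exact fun _ _ => subsingleton_of_forall_eq 0 Abelian.Ext.eq_zero_of_injective

lemma exists_shortExact_projective (N : ModuleCat.{u} A) :
    ∃ (L P : ModuleCat.{u} A) (i : L →ₗ[A] P) (p : P →ₗ[A] N),
      Module.Projective A P ∧ ShortExact i p :=
  ⟨_, ModuleCat.of A (N →₀ A), _, Finsupp.linearCombination A id, inferInstance,
    shortExact_ker (Finsupp.linearCombination_id_surjective A N)⟩

lemma exists_shortExact_finite_projective (N : ModuleCat.{u} A) [Module.Finite A N] :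
    ∃ (L P : ModuleCat.{u} A) (i : L →ₗ[A] P) (p : P →ₗ[A] N),
      Module.Finite A P ∧ Module.Projective A P ∧ ShortExact i p := by
  obtain ⟨n, p, hp⟩ := Module.Finite.exists_fin' A N
  exact ⟨_, ModuleCat.of A (Fin n → A), _, p, inferInstance, inferInstance, shortExact_ker hp⟩

lemma ExtensionClosed.pi (h𝒳 : ExtensionClosed 𝒳)
    (zero : ∀ M : ModuleCat.{u} A, Subsingleton M → 𝒳 M) {n : ℕ}
    (F : Fin n → ModuleCat.{u} A) (hF : ∀ i, 𝒳 (F i)) : 𝒳 (ModuleCat.of A (∀ i, F i)) := by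
  induction n with
  | zero => exact zero _ (inferInstanceAs (Subsingleton (∀ i : Fin 0, F i)))
  | succ n ih =>
    refine h𝒳 (F 0) _ (ModuleCat.of A (∀ i : Fin n, F i.succ)) (LinearMap.single A (fun i => F i) 0)
      (LinearMap.pi fun i => LinearMap.proj i.succ) ⟨?_, fun y => ⟨fun hy => ?_, ?_⟩, fun y => ?_⟩
      (hF 0) (ih _ fun i => hF _)
    · exact Pi.single_injective (M := fun i => F i) 0
    · refine ⟨y 0, funext (Fin.cases (Pi.single_eq_same (M := fun i => F i) 0 (y 0)) fun i => ?_)⟩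
      exact (Pi.single_eq_of_ne (M := fun i => F i) (Fin.succ_ne_zero i) (y 0)).trans
        (congrFun hy i).symm
    · rintro ⟨x, rfl⟩
      exact funext fun i => Pi.single_eq_of_ne (M := fun i => F i) (Fin.succ_ne_zero i) x
    · exact ⟨Fin.cons 0 y, funext fun i => Fin.cons_succ (α := fun i => F i) 0 y i⟩

namespace Resolving

lemma extensionClosed (h𝒳 : Resolving 𝒳) : ExtensionClosed 𝒳 := h𝒳.2.1

lemma of_subsingleton (h𝒳 : Resolving 𝒳) (M : ModuleCat.{u} A) [Subsingleton M] : 𝒳 M :=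
  h𝒳.1 M inferInstance ⟨0, fun _ => Subsingleton.elim _ _⟩

/-- Dimension shifting: the syzygies of `N` stay in `𝒳`. -/
lemma extZero_succ (h𝒳 : Resolving 𝒳) (hfin : ∀ N, 𝒳 N → Module.Finite A N)
    {K : ModuleCat.{u} A} (hK : InPerpOne 𝒳 K) (i : ℕ) : ∀ N, 𝒳 N → ExtZero N K (i + 1) := by
  induction i with
  | zero => exact hK
  | succ i ih =>
    intro N hN
    have := hfin N hN
    obtain ⟨L, P, j, p, _, _, h⟩ := exists_shortExact_finite_projective N
    have hL : 𝒳 L := h𝒳.2.2 _ _ _ j p h (h𝒳.1 P ‹_› ‹_›) hN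
    exact h.extZero_right_left (ih L hL) (extZero_of_projective P K _)

end Resolving

end Resolving

section FiniteProjectiveDimension

variable {A : Type u} [Ring A] {M M₁ M₂ M₃ : ModuleCat.{u} A}
  {f : M₁ →ₗ[A] M₂} {g : M₂ →ₗ[A] M₃}

lemma inP_iff : InP M ↔ Module.Finite A M ∧ ∃ n, HasProjectiveDimensionLT M n := by
  refine and_congr_right fun _ => ⟨fun ⟨n, hn⟩ => ⟨n + 1, ?_⟩, fun ⟨n, hn⟩ => ⟨n, ?_⟩⟩
  · exact (pdLE_iff_hasProjectiveDimensionLT M n).1 hn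
  · exact (pdLE_iff_hasProjectiveDimensionLT M n).2 (hasProjectiveDimensionLT_of_ge M n _ n.le_succ)

lemma extInjInP_iff : ExtInjInP M ↔ InP M ∧ InPerpOne InP M :=
  and_congr_right fun _ => forall₂_congr fun N _ => subsingleton_ext_succ_iff N M 0

lemma InP.of_projective [Module.Finite A M] [Module.Projective A M] : InP M := by
  have := (IsProjective.iff_projective M).1 ‹_›
  exact inP_iff.2 ⟨‹_›, 1, inferInstance⟩

lemma summandClosed_inP : SummandClosed (InP (A := A)) := by
  intro M S hS h
  obtain ⟨hf, n, hn⟩ := inP_iff.1 hS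
  exact inP_iff.2 ⟨h.finite hf, n, h.hasProjectiveDimensionLT hn⟩

namespace ShortExact

lemma finite_mid (h : ShortExact f g) (h₁ : Module.Finite A M₁) (h₃ : Module.Finite A M₃) :
    Module.Finite A M₂ := by
  refine ⟨Submodule.fg_of_fg_map_of_fg_inf_ker g ?_ ?_⟩
  · rw [Submodule.map_top, LinearMap.range_eq_top.2 h.2.2]
    exact h₃.1
  · rw [top_inf_eq, h.2.1.linearMap_ker_eq, LinearMap.range_eq_map]
    exact h₁.1.map f

lemma hasProjectiveDimensionLT_mid (h : ShortExact f g) {n : ℕ}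
    (h₁ : HasProjectiveDimensionLT M₁ n) (h₃ : HasProjectiveDimensionLT M₃ n) :
    HasProjectiveDimensionLT M₂ n :=
  h.shortExact_shortComplex.hasProjectiveDimensionLT_X₂ n h₁ h₃

lemma inP_mid (h : ShortExact f g) (h₁ : InP M₁) (h₃ : InP M₃) : InP M₂ := by
  obtain ⟨hf₁, n₁, h₁⟩ := inP_iff.1 h₁
  obtain ⟨hf₃, n₃, h₃⟩ := inP_iff.1 h₃
  exact inP_iff.2 ⟨h.finite_mid hf₁ hf₃, n₁ + n₃, h.hasProjectiveDimensionLT_mid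
    (hasProjectiveDimensionLT_of_ge M₁ n₁ _ (by omega))
    (hasProjectiveDimensionLT_of_ge M₃ n₃ _ (by omega))⟩

lemma inP_right (h : ShortExact f g) (h₁ : InP M₁) (h₂ : InP M₂) : InP M₃ := by
  obtain ⟨-, n₁, h₁⟩ := inP_iff.1 h₁
  obtain ⟨_, n₂, h₂⟩ := inP_iff.1 h₂
  exact inP_iff.2 ⟨Module.Finite.of_surjective g h.2.2, n₁ + n₂ + 1,
    h.shortExact_shortComplex.hasProjectiveDimensionLT_X₃ _
      (hasProjectiveDimensionLT_of_ge M₁ n₁ _ (by omega))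
      (hasProjectiveDimensionLT_of_ge M₂ n₂ _ (by omega))⟩

lemma inP_left [IsNoetherianRing A] (h : ShortExact f g) (h₂ : InP M₂) (h₃ : InP M₃) :
    InP M₁ := by
  obtain ⟨_, n₂, h₂⟩ := inP_iff.1 h₂
  obtain ⟨-, n₃, h₃⟩ := inP_iff.1 h₃
  exact inP_iff.2 ⟨Module.Finite.of_injective f h.1, n₂ + n₃,
    h.shortExact_shortComplex.hasProjectiveDimensionLT_X₁ _
      (hasProjectiveDimensionLT_of_ge M₂ n₂ _ (by omega))
      (hasProjectiveDimensionLT_of_ge M₃ n₃ _ (by omega))⟩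

end ShortExact

lemma resolving_inP [IsNoetherianRing A] : Resolving (InP (A := A)) :=
  ⟨fun _ _ _ => .of_projective, fun _ _ _ _ _ h => h.inP_mid, fun _ _ _ _ _ h => h.inP_left⟩

end FiniteProjectiveDimension

section Approximations

variable {A : Type u} [Ring A] {𝒳 : ModuleCat.{u} A → Prop} {X Y M N : ModuleCat.{u} A}
  {f : X →ₗ[A] M} {g : Y →ₗ[A] N}

/-- A special right `𝒳`-approximation of `M`: a surjection from an object of `𝒳` whose kernel lies
in the right orthogonal of `𝒳`. Wakamatsu's lemma produces these, and unlike minimal approximations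
they can be assembled along short exact sequences. -/
def IsSpecialRightApprox (𝒳 : ModuleCat.{u} A → Prop) (f : X →ₗ[A] M) : Prop :=
  𝒳 X ∧ Function.Surjective f ∧ InPerpOne 𝒳 (ModuleCat.of A (LinearMap.ker f))

lemma comp_pow_eq_of_comp_eq {e : X →ₗ[A] X} (he : f ∘ₗ e = f) (n : ℕ) : f ∘ₗ (e ^ n) = f := by
  induction n with
  | zero => rfl
  | succ n ih => rw [pow_succ, Module.End.mul_eq_comp, ← LinearMap.comp_assoc, ih, he]

namespace IsRightApprox

lemma surjective (hf : IsRightApprox 𝒳 f) (hA : 𝒳 (ModuleCat.of A A)) :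
    Function.Surjective f := by
  intro m
  obtain ⟨h, hh⟩ := hf.2 (ModuleCat.of A A) hA (LinearMap.toSpanSingleton A M m)
  exact ⟨h (1 : A), by simpa using LinearMap.congr_fun hh (1 : A)⟩

lemma of_comp_eq {c : Y →ₗ[A] M} {r : X →ₗ[A] Y} (hf : IsRightApprox 𝒳 f) (hY : 𝒳 Y)
    (h : c ∘ₗ r = f) : IsRightApprox 𝒳 c := by
  refine ⟨hY, fun Z hZ φ => ?_⟩
  obtain ⟨ψ, rfl⟩ := hf.2 Z hZ φ
  exact ⟨r ∘ₗ ψ, by rw [← LinearMap.comp_assoc, h]⟩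

lemma isMinimalRightApprox_of_length_le [IsNoetherian A X] [IsArtinian A X]
    (h𝒳 : SummandClosed 𝒳) (hf : IsRightApprox 𝒳 f)
    (hmin : ∀ (Y : ModuleCat.{u} A) (c : Y →ₗ[A] M), IsRightApprox 𝒳 c →
      Module.length A X ≤ Module.length A Y) : IsMinimalRightApprox 𝒳 f := by
  refine ⟨hf, fun e he => ?_⟩
  -- Fitting: the image of a high power of `e` is a summand of `X` that still approximates `M`.
  obtain ⟨n, hcompl, hn⟩ := (LinearMap.eventually_isCompl_ker_pow_range_pow e).and
    (Filter.eventually_ge_atTop 1) |>.exists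
  have happrox : IsRightApprox 𝒳 (XM := ModuleCat.of A (LinearMap.range (e ^ n)))
      (f ∘ₗ (LinearMap.range (e ^ n)).subtype) :=
    hf.of_comp_eq (r := (e ^ n).rangeRestrict)
      (h𝒳 _ X hf.1 (.of_isCompl hcompl.symm)) (comp_pow_eq_of_comp_eq he n)
  have hrange : LinearMap.range (e ^ n) = ⊤ := by
    by_contra hne
    exact (hmin _ _ happrox).not_gt (Submodule.length_lt hne)
  have hsurj : Function.Surjective e := by
    rw [← LinearMap.range_eq_top, eq_top_iff, ← hrange, ← Nat.sub_add_cancel hn, pow_succ']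
    exact LinearMap.range_comp_le_range _ _
  exact IsNoetherian.bijective_of_surjective_endomorphism e hsurj

lemma exists_isMinimalRightApprox [IsNoetherian A X] [IsArtinian A X] (h𝒳 : SummandClosed 𝒳)
    (hf : IsRightApprox 𝒳 f) :
    ∃ (Y : ModuleCat.{u} A) (c : Y →ₗ[A] M), IsMinimalRightApprox 𝒳 c := by
  obtain ⟨⟨Y, c⟩, hc, hmin⟩ := WellFounded.has_min
    (InvImage.wf (fun p : Σ Y : ModuleCat.{u} A, Y →ₗ[A] M => Module.length A p.1) wellFounded_lt)
    {p | IsRightApprox 𝒳 p.2} ⟨⟨X, f⟩, hf⟩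
  have hle : ∀ (Z : ModuleCat.{u} A) (d : Z →ₗ[A] M), IsRightApprox 𝒳 d →
      Module.length A Y ≤ Module.length A Z := fun Z d hd => not_lt.1 (hmin ⟨Z, d⟩ hd)
  have hX : Module.length A X ≠ ⊤ :=
    Module.length_ne_top_iff.2 (isFiniteLength_iff_isNoetherian_isArtinian.2 ⟨‹_›, ‹_›⟩)
  obtain ⟨_, _⟩ := isFiniteLength_iff_isNoetherian_isArtinian.1
    (Module.length_ne_top_iff.1 ((hle X f hf).trans_lt hX.lt_top).ne)
  exact ⟨Y, c, hc.isMinimalRightApprox_of_length_le h𝒳 hle⟩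

end IsRightApprox

namespace IsMinimalRightApprox

lemma isSummand (hf : IsMinimalRightApprox 𝒳 f) (hg : IsRightApprox 𝒳 g) (h : IsSummand M N) :
    IsSummand X Y := by
  obtain ⟨s, r, hrs⟩ := h
  obtain ⟨a, ha⟩ := hg.2 X hf.1.1 (s ∘ₗ f)
  obtain ⟨b, hb⟩ := hf.1.2 Y hg.1 (r ∘ₗ g)
  have hba : f ∘ₗ (b ∘ₗ a) = f := by
    rw [← LinearMap.comp_assoc, hb, LinearMap.comp_assoc, ha, ← LinearMap.comp_assoc, hrs,
      LinearMap.id_comp]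
  let e := LinearEquiv.ofBijective _ (hf.2 _ hba)
  exact ⟨a, e.symm.toLinearMap ∘ₗ b, LinearMap.ext e.symm_apply_apply⟩

/-- Wakamatsu's lemma. Pushing a presentation `L → P → N` out along `L → ker f → X` gives an
extension of `N` by `X` that lies in `𝒳` and to which `f` extends; by minimality it then splits. -/
lemma inPerpOne_ker (h𝒳 : ExtensionClosed 𝒳) (hf : IsMinimalRightApprox 𝒳 f) :
    InPerpOne 𝒳 (ModuleCat.of A (LinearMap.ker f)) := by
  intro N hN
  obtain ⟨L, P, i, p, _, h⟩ := exists_shortExact_projective N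
  refine h.extZero_one_of_forall_exists_extend fun φ => ?_
  let l : L →ₗ[A] X := (LinearMap.ker f).subtype ∘ₗ φ
  let c : LinearPushout l i →ₗ[A] M :=
    LinearPushout.desc f 0 (LinearMap.ext fun z => (φ z).2)
  obtain ⟨u, hu⟩ := hf.1.2 _ (h𝒳 _ _ _ _ _ (h.pushout l) hf.1.1 hN) c
  have hfixed : f ∘ₗ (u ∘ₗ LinearPushout.inl l i) = f := by
    rw [← LinearMap.comp_assoc, hu, LinearPushout.desc_inl]
  let e := LinearEquiv.ofBijective _ (hf.2 _ hfixed)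
  have he : f ∘ₗ e.symm.toLinearMap = f :=
    LinearMap.ext fun x => (LinearMap.congr_fun hfixed _).symm.trans
      (congrArg f (e.apply_symm_apply x))
  have hker : f ∘ₗ (e.symm.toLinearMap ∘ₗ u ∘ₗ LinearPushout.inr l i) = 0 := by
    rw [← LinearMap.comp_assoc, he, ← LinearMap.comp_assoc, hu, LinearPushout.desc_inr]
  refine ⟨LinearMap.codRestrict _ _ (LinearMap.congr_fun hker), LinearMap.ext fun z =>
    Subtype.ext ?_⟩
  calc e.symm (u (LinearPushout.inr l i (i z)))
      = e.symm (e (l z)) := congrArg (fun v => e.symm (u v))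
        (LinearMap.congr_fun LinearPushout.inl_comp z).symm
    _ = φ z := e.symm_apply_apply _

lemma isSpecialRightApprox (h𝒳 : ExtensionClosed 𝒳) (hA : 𝒳 (ModuleCat.of A A))
    (hf : IsMinimalRightApprox 𝒳 f) : IsSpecialRightApprox 𝒳 f :=
  ⟨hf.1.1, hf.1.surjective hA, hf.inPerpOne_ker h𝒳⟩

end IsMinimalRightApprox

lemma IsSpecialRightApprox.isSummand (hf : IsSpecialRightApprox 𝒳 f) (hM : 𝒳 M) :
    IsSummand M X := by
  obtain ⟨s, hs⟩ := (shortExact_ker hf.2.1).exists_lift (hf.2.2 M hM) LinearMap.id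
  exact ⟨s, f, hs⟩

end Approximations

section BoundedProjectiveDimension

variable {A : Type u} [Ring A]

section Ladder

variable {X V Y M₁ M₂ M₃ : ModuleCat.{u} A} {a : X →ₗ[A] V} {p : V →ₗ[A] Y}
  {f : M₁ →ₗ[A] M₂} {g : M₂ →ₗ[A] M₃} {c₁ : X →ₗ[A] M₁} {c₂ : V →ₗ[A] M₂} {c₃ : Y →ₗ[A] M₃}

namespace ShortExact

lemma exists_map_add_eq (h : ShortExact f g) (hc₁ : Function.Surjective c₁)
    (hl : c₂ ∘ₗ a = f ∘ₗ c₁) (hr : g ∘ₗ c₂ = c₃ ∘ₗ p) {v : V} {m : M₂} (hv : c₃ (p v) = g m) :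
    ∃ x, c₂ (v + a x) = m := by
  obtain ⟨m₁, hm₁⟩ := (h.2.1 (m - c₂ v)).1
    (by rw [map_sub, show g (c₂ v) = _ from LinearMap.congr_fun hr v, ← hv]; exact sub_self _)
  obtain ⟨x, rfl⟩ := hc₁ m₁
  exact ⟨x, by rw [map_add, show c₂ (a x) = _ from LinearMap.congr_fun hl x]; simp [hm₁]⟩

lemma surjective_mid (h : ShortExact f g) (hp : Function.Surjective p)
    (hl : c₂ ∘ₗ a = f ∘ₗ c₁) (hr : g ∘ₗ c₂ = c₃ ∘ₗ p) (hc₁ : Function.Surjective c₁)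
    (hc₃ : Function.Surjective c₃) : Function.Surjective c₂ := by
  intro m
  obtain ⟨v, hv⟩ := (hc₃.comp hp) (g m)
  obtain ⟨x, hx⟩ := h.exists_map_add_eq hc₁ hl hr hv
  exact ⟨_, hx⟩

lemma exists_shortExact_ker (h' : ShortExact a p) (h : ShortExact f g)
    (hl : c₂ ∘ₗ a = f ∘ₗ c₁) (hr : g ∘ₗ c₂ = c₃ ∘ₗ p) (hc₁ : Function.Surjective c₁) :
    ∃ (a₀ : LinearMap.ker c₁ →ₗ[A] LinearMap.ker c₂)
      (p₀ : LinearMap.ker c₂ →ₗ[A] LinearMap.ker c₃),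
      ShortExact (M₁ := ModuleCat.of A (LinearMap.ker c₁)) (M₂ := ModuleCat.of A (LinearMap.ker c₂))
        (M₃ := ModuleCat.of A (LinearMap.ker c₃)) a₀ p₀ := by
  have hl : ∀ x, c₂ (a x) = f (c₁ x) := LinearMap.congr_fun hl
  have hr' : ∀ v, g (c₂ v) = c₃ (p v) := LinearMap.congr_fun hr
  refine ⟨a.restrict fun x hx => ?_, p.restrict fun v hv => ?_, ?_, ?_, ?_⟩
  · rw [LinearMap.mem_ker] at hx ⊢
    rw [hl, hx, map_zero]
  · rw [LinearMap.mem_ker] at hv ⊢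
    rw [← hr', hv, map_zero]
  · exact fun x y hxy => Subtype.ext (h'.1 (congrArg Subtype.val hxy))
  · rintro ⟨v, hv⟩
    constructor
    · intro hpv
      obtain ⟨x, rfl⟩ := (h'.2.1 v).1 (congrArg Subtype.val hpv)
      exact ⟨⟨x, h.1 (((hl x).symm.trans hv).trans (map_zero f).symm)⟩, rfl⟩
    · rintro ⟨x, hx⟩
      rw [← hx]
      exact Subtype.ext (h'.2.1.apply_apply_eq_zero x.1)
  · rintro ⟨y, hy⟩
    obtain ⟨v, rfl⟩ := h'.2.2 y
    obtain ⟨x, hx⟩ := h.exists_map_add_eq hc₁ (LinearMap.ext hl) hr (hy.trans (map_zero g).symm)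
    refine ⟨⟨_, hx⟩, Subtype.ext ?_⟩
    exact (map_add p v (a x)).trans (by rw [h'.2.1.apply_apply_eq_zero, add_zero])

lemma exists_ladder (h : ShortExact f g) (hc₁ : Function.Surjective c₁) (c₃ : Y →ₗ[A] M₃)
    (hext : ExtZero Y (ModuleCat.of A (LinearMap.ker c₁)) 2) :
    ∃ (V : ModuleCat.{u} A) (a : X →ₗ[A] V) (p : V →ₗ[A] Y) (c₂ : V →ₗ[A] M₂),
      ShortExact a p ∧ c₂ ∘ₗ a = f ∘ₗ c₁ ∧ g ∘ₗ c₂ = c₃ ∘ₗ p := by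
  obtain ⟨L, P, i, π, _, hY⟩ := exists_shortExact_projective Y
  obtain ⟨q, hq⟩ := Module.projective_lifting_property g (c₃ ∘ₗ π) h.2.2
  obtain ⟨k, hk⟩ := h.exists_comp_eq (φ := q ∘ₗ i)
    (by rw [← LinearMap.comp_assoc, hq, LinearMap.comp_assoc, hY.2.1.linearMap_comp_eq_zero,
      LinearMap.comp_zero])
  obtain ⟨l, hl⟩ := (shortExact_ker hc₁).exists_lift
    (hY.extZero_left_left (extZero_of_projective P _ 0) hext) k
  have hsquare : (f ∘ₗ c₁) ∘ₗ l = q ∘ₗ i := by rw [LinearMap.comp_assoc, hl, hk]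
  refine ⟨LinearPushout l i, LinearPushout.inl l i, _, LinearPushout.desc (f ∘ₗ c₁) q hsquare,
    hY.pushout l, LinearPushout.desc_inl _, LinearPushout.hom_ext ?_ ?_⟩
  · rw [LinearMap.comp_assoc, LinearMap.comp_assoc, LinearPushout.desc_inl,
      LinearPushout.desc_inl, ← LinearMap.comp_assoc, h.2.1.linearMap_comp_eq_zero,
      LinearMap.zero_comp, LinearMap.comp_zero]
  · rw [LinearMap.comp_assoc, LinearMap.comp_assoc, LinearPushout.desc_inr,
      LinearPushout.desc_inr, hq]

end ShortExact

end Ladder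

variable {𝒳 𝒟 : ModuleCat.{u} A → Prop}

lemma Resolving.exists_isSpecialRightApprox_mid (h𝒳 : Resolving 𝒳)
    (hfin : ∀ N, 𝒳 N → Module.Finite A N) {X Y M₁ M₂ M₃ : ModuleCat.{u} A} {f : M₁ →ₗ[A] M₂}
    {g : M₂ →ₗ[A] M₃} (h : ShortExact f g) {c₁ : X →ₗ[A] M₁} (hc₁ : IsSpecialRightApprox 𝒳 c₁)
    {c₃ : Y →ₗ[A] M₃} (hc₃ : IsSpecialRightApprox 𝒳 c₃) :
    ∃ (V : ModuleCat.{u} A) (a : X →ₗ[A] V) (p : V →ₗ[A] Y) (c₂ : V →ₗ[A] M₂),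
      ShortExact a p ∧ IsSpecialRightApprox 𝒳 c₂ := by
  obtain ⟨V, a, p, c₂, hV, hl, hr⟩ := h.exists_ladder hc₁.2.1 c₃
    (h𝒳.extZero_succ hfin hc₁.2.2 1 Y hc₃.1)
  obtain ⟨a₀, p₀, hker⟩ := hV.exists_shortExact_ker h hl hr hc₁.2.1
  exact ⟨V, a, p, c₂, hV, h𝒳.extensionClosed _ _ _ _ _ hV hc₁.1 hc₃.1,
    h.surjective_mid hV.2.2 hl hr hc₁.2.1 hc₃.2.1,
    fun N hN => hker.extZero_mid_right (hc₁.2.2 N hN) (hc₃.2.2 N hN)⟩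

lemma Resolving.exists_isSpecialRightApprox_of_isFiniteLength (h𝒳 : Resolving 𝒳)
    (hfin : ∀ N, 𝒳 N → Module.Finite A N)
    (zero : ∀ M : ModuleCat.{u} A, Subsingleton M → 𝒟 M) (h𝒟 : ExtensionClosed 𝒟)
    (simple : ∀ S : ModuleCat.{u} A, IsSimpleModule A S →
      ∃ (X : ModuleCat.{u} A) (f : X →ₗ[A] S), 𝒟 X ∧ IsSpecialRightApprox 𝒳 f)
    {M : Type u} [AddCommGroup M] [Module A M] (hM : IsFiniteLength A M) :
    ∃ (X : ModuleCat.{u} A) (f : X →ₗ[A] ModuleCat.of A M), 𝒟 X ∧ IsSpecialRightApprox 𝒳 f := by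
  induction hM with
  | @of_subsingleton M _ _ _ =>
    have : Subsingleton (LinearMap.ker (LinearMap.id : M →ₗ[A] M)) :=
      Subtype.coe_injective.subsingleton
    exact ⟨ModuleCat.of A M, LinearMap.id, zero _ ‹_›, h𝒳.of_subsingleton _,
      Function.surjective_id, inPerpOne_of_subsingleton 𝒳 _⟩
  | @of_simple_quotient M _ _ M' hS _ ih =>
    obtain ⟨X, c₁, hX, hc₁⟩ := ih
    obtain ⟨Y, c₃, hY, hc₃⟩ := simple (ModuleCat.of A (M ⧸ M')) hS
    have h : ShortExact (M₁ := ModuleCat.of A M') (M₂ := ModuleCat.of A M)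
        (M₃ := ModuleCat.of A (M ⧸ M')) M'.subtype M'.mkQ :=
      ⟨Subtype.val_injective, LinearMap.exact_subtype_mkQ M', M'.mkQ_surjective⟩
    obtain ⟨V, a, p, c₂, hV, hc₂⟩ := h𝒳.exists_isSpecialRightApprox_mid hfin h hc₁ hc₃
    exact ⟨V, c₂, h𝒟 _ _ _ a p hV hX hY, hc₂⟩

lemma isSummand_quotient_jacobson_of_isSimpleModule [IsArtinianRing A] (S : ModuleCat.{u} A)
    [IsSimpleModule A S] : IsSummand S (ModuleCat.of A (A ⧸ Module.jacobson A A)) := by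
  obtain ⟨m, hm, ⟨e⟩⟩ := isSimpleModule_iff_quot_maximal.1 ‹IsSimpleModule A S›
  have : IsSemisimpleModule A (A ⧸ Module.jacobson A A) :=
    (IsArtinian.isSemisimpleModule_iff_jacobson A _).2 (Module.jacobson_quotient_jacobson A A)
  have hle : Module.jacobson A A ≤ m := sInf_le hm.out
  let q : (A ⧸ Module.jacobson A A) →ₗ[A] S := e.symm.toLinearMap ∘ₗ Submodule.factor hle
  have hq : Function.Surjective q := e.symm.surjective.comp (Submodule.factor_surjective hle)
  obtain ⟨s, hs⟩ := IsSemisimpleModule.lifting_property q hq LinearMap.id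
  exact ⟨s, q, hs⟩

namespace ContravariantlyFinite

variable [IsArtinianRing A]

lemma exists_isMinimalRightApprox (hcf : ContravariantlyFinite (InP (A := A)))
    (M : ModuleCat.{u} A) [Module.Finite A M] :
    ∃ (X : ModuleCat.{u} A) (f : X →ₗ[A] M), IsMinimalRightApprox InP f := by
  obtain ⟨X, f, hf⟩ := hcf M ‹_›
  have := hf.1.1
  exact hf.exists_isMinimalRightApprox summandClosed_inP

lemma exists_hasProjectiveDimensionLT (hcf : ContravariantlyFinite (InP (A := A))) :
    ∃ d, ∀ N : ModuleCat.{u} A, InP N → HasProjectiveDimensionLT N d := by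
  obtain ⟨Y, g, hg⟩ := hcf (ModuleCat.of A (A ⧸ Module.jacobson A A)) inferInstance
  obtain ⟨-, d, hd⟩ := inP_iff.1 hg.1
  have zero (M : ModuleCat.{u} A) (_ : Subsingleton M) : HasProjectiveDimensionLT M d :=
    have := (ModuleCat.isZero_of_subsingleton M).hasProjectiveDimensionLT_zero
    hasProjectiveDimensionLT_of_ge M 0 d d.zero_le
  have simple (S : ModuleCat.{u} A) (_ : IsSimpleModule A S) :
      ∃ (X : ModuleCat.{u} A) (f : X →ₗ[A] S),
        HasProjectiveDimensionLT X d ∧ IsSpecialRightApprox InP f := by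
    obtain ⟨X, f, hf⟩ := hcf.exists_isMinimalRightApprox S
    have hX : IsSummand X Y := hf.isSummand hg (isSummand_quotient_jacobson_of_isSimpleModule S)
    exact ⟨X, f, hX.hasProjectiveDimensionLT hd,
      hf.isSpecialRightApprox resolving_inP.extensionClosed .of_projective⟩
  refine ⟨d, fun N hN => ?_⟩
  have := hN.1
  have hlength : IsFiniteLength A N :=
    isFiniteLength_iff_isNoetherian_isArtinian.2 ⟨inferInstance, inferInstance⟩
  obtain ⟨X, f, hX, hf⟩ := resolving_inP.exists_isSpecialRightApprox_of_isFiniteLength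
    (fun _ h => h.1) zero (fun _ _ _ _ _ h => h.hasProjectiveDimensionLT_mid) simple hlength
  exact (hf.isSummand hN).hasProjectiveDimensionLT hX

end ContravariantlyFinite

end BoundedProjectiveDimension

section RelativeCogenerator

variable {A : Type u} [Ring A] {𝒳 : ModuleCat.{u} A → Prop}

/-- `X` cogenerates `𝒳`: every object of `𝒳` embeds into a finite power of `X`. The module `X`
itself need not lie in `𝒳`. -/
def Cogenerates (𝒳 : ModuleCat.{u} A → Prop) (X : ModuleCat.{u} A) : Prop :=
  ∀ M, 𝒳 M → ∃ (n : ℕ) (f : M →ₗ[A] (Fin n → X)), Function.Injective f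

lemma IsRightApprox.cogenerates {X I : ModuleCat.{u} A} {p : X →ₗ[A] I}
    (hp : IsRightApprox 𝒳 p) (hI : Cogenerates 𝒳 I) : Cogenerates 𝒳 X := by
  intro M hM
  obtain ⟨n, f, hf⟩ := hI M hM
  choose g hg using fun i => hp.2 M hM (LinearMap.proj i ∘ₗ f)
  refine ⟨n, LinearMap.pi g, fun x y hxy => hf (funext fun i => ?_)⟩
  exact (LinearMap.congr_fun (hg i) x).symm.trans
    ((congrArg p (congrFun hxy i)).trans (LinearMap.congr_fun (hg i) y))

lemma IsSpecialRightApprox.inPerpOne {X I : ModuleCat.{u} A} [Module.Injective A I]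
    {p : X →ₗ[A] I} (hp : IsSpecialRightApprox 𝒳 p) : InPerpOne 𝒳 X := fun N hN =>
  (shortExact_ker hp.2.1).extZero_mid_right (hp.2.2 N hN) (extZero_of_injective N I 0)

section ExtInjective

variable {T M : ModuleCat.{u} A}

lemma summandClosed_extInjInP : SummandClosed (ExtInjInP (A := A)) := by
  intro M S hS h
  rw [extInjInP_iff] at hS ⊢
  exact ⟨summandClosed_inP M S hS.1 h, fun N hN => h.extZero (hS.2 N hN)⟩

lemma extensionClosed_extInjInP : ExtensionClosed (ExtInjInP (A := A)) := by
  intro M₁ M₂ M₃ f g h h₁ h₃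
  rw [extInjInP_iff] at h₁ h₃ ⊢
  exact ⟨h.inP_mid h₁.1 h₃.1, fun N hN => h.extZero_mid_right (h₁.2 N hN) (h₃.2 N hN)⟩

lemma extInjInP_of_subsingleton (M : ModuleCat.{u} A) (_ : Subsingleton M) : ExtInjInP M :=
  have : Module.Projective A M := ⟨0, fun _ => Subsingleton.elim _ _⟩
  extInjInP_iff.2 ⟨.of_projective, inPerpOne_of_subsingleton InP M⟩

namespace ExtInjInP

lemma pi {n : ℕ} {F : Fin n → ModuleCat.{u} A} (hF : ∀ i, ExtInjInP (F i)) :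
    ExtInjInP (ModuleCat.of A (∀ i, F i)) :=
  extensionClosed_extInjInP.pi extInjInP_of_subsingleton F hF

lemma directSum {ι : Type u} [Finite ι] {F : ι → ModuleCat.{u} A} (hF : ∀ i, ExtInjInP (F i)) :
    ExtInjInP (ModuleCat.of A (DirectSum ι fun i => F i)) := by
  classical
  have := Fintype.ofFinite ι
  obtain ⟨n, ⟨σ⟩⟩ := Finite.exists_equiv_fin ι
  exact summandClosed_extInjInP _ _ (pi fun j => hF (σ.symm j))
    (.of_linearEquiv (DirectSum.linearEquivFunOnFintype A ι (fun i => F i) ≪≫ₗ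
      LinearEquiv.piCongrLeft' A (fun i => F i) σ))

lemma extVanish [IsNoetherianRing A] (hM : ExtInjInP M) {N : ModuleCat.{u} A} (hN : InP N) :
    ExtVanish N M :=
  extVanish_iff.2 fun i =>
    resolving_inP.extZero_succ (fun _ h => h.1) (extInjInP_iff.1 hM).2 i N hN

lemma exists_isSummand_pi {X : ModuleCat.{u} A} (hX : ExtInjInP X) (hcog : Cogenerates InP X)
    (hM : ExtInjInP M) : ∃ n : ℕ, IsSummand M (ModuleCat.of A (Fin n → X)) := by
  obtain ⟨n, f, hf⟩ := hcog M hM.1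
  have h := shortExact_quotient (M₂ := ModuleCat.of A (Fin n → X)) hf
  have hcoker := h.inP_right hM.1 (ExtInjInP.pi fun _ => hX).1
  obtain ⟨r, hr⟩ := h.exists_extend ((extInjInP_iff.1 hM).2 _ hcoker) LinearMap.id
  exact ⟨n, f, r, hr⟩

end ExtInjInP

lemma ContravariantlyFinite.exists_extInjInP_cogenerates [IsArtinianRing A]
    (hcf : ContravariantlyFinite (InP (A := A))) {I : ModuleCat.{u} A} [Module.Finite A I]
    [Module.Injective A I] (hI : Cogenerates InP I) :
    ∃ X : ModuleCat.{u} A, ExtInjInP X ∧ Cogenerates InP X := by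
  obtain ⟨X, p, hp⟩ := hcf.exists_isMinimalRightApprox I
  have hspecial := hp.isSpecialRightApprox resolving_inP.extensionClosed .of_projective
  exact ⟨X, extInjInP_iff.2 ⟨hp.1.1, hspecial.inPerpOne⟩, hp.1.cogenerates hI⟩

lemma inAddOf_eq_iff : InAddOf (fun X => X = T) M ↔
    ∃ k : ℕ, IsSummand M (ModuleCat.of A (Fin k → T)) := by
  constructor
  · rintro ⟨k, F, hF, h⟩
    obtain rfl : F = fun _ => T := funext hF
    exact ⟨k, h.trans (.of_linearEquiv (DirectSum.linearEquivFunOnFintype A (Fin k) fun _ => T))⟩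
  · rintro ⟨k, h⟩
    exact ⟨k, fun _ => T, fun _ => rfl, h.trans
      (.of_linearEquiv (DirectSum.linearEquivFunOnFintype A (Fin k) fun _ => T).symm)⟩

namespace HasAddCoresolution

lemma of_inAddOf (h : InAddOf (fun X => X = T) M) : HasAddCoresolution T M := by
  refine ⟨fun n => Nat.casesOn n M fun _ => ModuleCat.of A PUnit, fun _ => 0, LinearMap.id,
    Function.injective_id, ?_, ?_, ?_, 1, ?_⟩
  · exact fun y => ⟨fun _ => ⟨y, rfl⟩, fun _ => rfl⟩
  · exact fun i y => ⟨fun _ => ⟨0, Subsingleton.elim (α := PUnit) _ _⟩, fun _ => rfl⟩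
  · rintro (_ | i)
    · exact h
    · exact inAddOf_eq_iff.2 ⟨0, 0, 0, LinearMap.ext fun _ => Subsingleton.elim (α := PUnit) _ _⟩
  · rintro (_ | i) hi
    · omega
    · exact inferInstanceAs (Subsingleton PUnit)

lemma of_shortExact {X M' : ModuleCat.{u} A} {f : M →ₗ[A] X} {g : X →ₗ[A] M'}
    (h : ShortExact f g) (hX : InAddOf (fun X => X = T) X) (hM' : HasAddCoresolution T M') :
    HasAddCoresolution T M := by
  obtain ⟨C, d, a, ha, h0, hd, hC, m, hm⟩ := hM'
  refine ⟨fun n => Nat.casesOn n X C,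
    fun n => Nat.rec (motive := fun n => (Nat.casesOn n X C : ModuleCat.{u} A) →ₗ[A] C n)
      (a ∘ₗ g) (fun n _ => d n) n, f, h.1, ?_, ?_, ?_, m + 1, ?_⟩
  · exact fun y => (map_eq_zero_iff a ha).trans (h.2.1 y)
  · rintro (_ | i)
    · refine fun y => (h0 y).trans ⟨?_, fun ⟨z, hz⟩ => ⟨g z, hz⟩⟩
      rintro ⟨x, rfl⟩
      obtain ⟨z, rfl⟩ := h.2.2 x
      exact ⟨z, rfl⟩
    · exact hd i
  · rintro (_ | i)
    exacts [hX, hC i]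
  · rintro (_ | i) hi
    · omega
    · exact hm i (by omega)

end HasAddCoresolution

/-- Each cosyzygy lowers by one the degree from which `Ext(𝒫, M)` vanishes. -/
lemma InP.hasAddCoresolution [IsNoetherianRing A] {X : ModuleCat.{u} A} (hX : ExtInjInP X)
    (hcog : Cogenerates InP X) (hT : ∀ E, ExtInjInP E → InAddOf (fun X => X = T) E) (d : ℕ)
    (hM : InP M) (hvanish : ∀ N, InP N → ∀ i, d ≤ i → ExtZero N M (i + 1)) :
    HasAddCoresolution T M := by
  induction d generalizing M with
  | zero => exact .of_inAddOf (hT M (extInjInP_iff.2 ⟨hM, fun N hN => hvanish N hN 0 le_rfl⟩))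
  | succ d ih =>
    obtain ⟨n, f, hf⟩ := hcog M hM
    have hXn : ExtInjInP (ModuleCat.of A (Fin n → X)) := .pi fun _ => hX
    have h := shortExact_quotient (M₂ := ModuleCat.of A (Fin n → X)) hf
    refine .of_shortExact h (hT _ hXn) (ih (h.inP_right hM hXn.1) fun N hN i hi => ?_)
    exact h.extZero_right_right (extVanish_iff.1 (hXn.extVanish hN) i)
      (hvanish N hN (i + 1) (by omega))

end ExtInjective

end RelativeCogenerator

section KrullSchmidt

variable {A : Type u} [Ring A] {F M T : ModuleCat.{u} A}

lemma indec_iff : Indec M ↔ ¬ Subsingleton M ∧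
    ∀ N₁ N₂ : Submodule A M, IsCompl N₁ N₂ → N₁ = ⊤ ∨ N₂ = ⊤ := by
  refine and_congr_right fun _ => ⟨fun h N₁ N₂ hN => ?_, fun h e he => ?_⟩
  · rcases h (N₁.projection N₂ hN) (Submodule.isIdempotentElem_projection hN).eq with h | h
    · exact Or.inr (by rw [← Submodule.ker_projection hN, h, LinearMap.ker_zero])
    · exact Or.inl (by rw [← Submodule.range_projection hN, h, LinearMap.range_id])
  · rcases h _ _ (LinearMap.IsIdempotentElem.isCompl (f := e) he) with h | h
    · refine Or.inr (LinearMap.ext fun x => ?_)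
      obtain ⟨y, rfl⟩ := LinearMap.range_eq_top.1 h x
      exact LinearMap.congr_fun he y
    · exact Or.inl (LinearMap.ker_eq_top.1 h)

lemma exists_linearEquiv_pi_indec [IsNoetherian A M] [IsArtinian A M] :
    ∃ (κ : Type) (_ : Finite κ) (N : κ → ModuleCat.{u} A),
      (∀ k, Indec (N k)) ∧ Nonempty (M ≃ₗ[A] ∀ k, N k) := by
  induction h : Module.length A M using WellFoundedLT.induction generalizing M with
  | ind l ih =>
  subst h
  by_cases hM : Subsingleton M
  · exact ⟨Empty, inferInstance, fun _ => M, nofun, ⟨LinearEquiv.ofSubsingleton _ _⟩⟩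
  by_cases hindec : Indec M
  · exact ⟨Unit, inferInstance, fun _ => M, fun _ => hindec,
      ⟨(LinearEquiv.funUnique Unit A M).symm⟩⟩
  simp only [indec_iff, hM, not_false_eq_true, true_and, not_forall, not_or] at hindec
  obtain ⟨N₁, N₂, hN, hN₁, hN₂⟩ := hindec
  obtain ⟨κ₁, _, F₁, hF₁, ⟨e₁⟩⟩ := ih _ (Submodule.length_lt hN₁) (M := ModuleCat.of A N₁) rfl
  obtain ⟨κ₂, _, F₂, hF₂, ⟨e₂⟩⟩ := ih _ (Submodule.length_lt hN₂) (M := ModuleCat.of A N₂) rfl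
  exact ⟨κ₁ ⊕ κ₂, inferInstance, Sum.elim F₁ F₂, Sum.rec hF₁ hF₂,
    ⟨(Submodule.prodEquivOfIsCompl N₁ N₂ hN).symm ≪≫ₗ e₁.prodCongr e₂ ≪≫ₗ
      (LinearEquiv.sumPiEquivProdPi A κ₁ κ₂ fun k => ↥(Sum.elim F₁ F₂ k : ModuleCat A)).symm⟩⟩

namespace Indec

variable [IsNoetherian A M] [IsArtinian A M]

lemma isUnit_or_isNilpotent (hM : Indec M) (φ : Module.End A M) : IsUnit φ ∨ IsNilpotent φ := by
  obtain ⟨n, hcompl, hn⟩ := (φ.eventually_isCompl_ker_pow_range_pow.and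
    (Filter.eventually_gt_atTop 0)).exists
  rcases (indec_iff.1 hM).2 _ _ hcompl with hker | hrange
  · exact Or.inr ⟨n, LinearMap.ker_eq_top.1 hker⟩
  · have hunit : IsUnit (φ ^ n) := (Module.End.isUnit_iff _).2
      (IsNoetherian.bijective_of_surjective_endomorphism _ (LinearMap.range_eq_top.1 hrange))
    exact Or.inl ((isUnit_pow_iff hn.ne').1 hunit)

lemma isLocalRing_end (hM : Indec M) : IsLocalRing (Module.End A M) := by
  have := not_subsingleton_iff_nontrivial.1 hM.1
  refine ⟨fun {a b} hab => (hM.isUnit_or_isNilpotent a).imp_right fun ha => ?_⟩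
  rw [← eq_sub_iff_add_eq'] at hab
  exact hab ▸ ha.isUnit_one_sub

end Indec

namespace IsSummand

lemma exists_of_pi [IsLocalRing (Module.End A F)] {κ : Type} [Finite κ]
    {N : κ → ModuleCat.{u} A} (h : IsSummand F (ModuleCat.of A (∀ k, N k))) :
    ∃ k, IsSummand F (N k) := by
  classical
  have := Fintype.ofFinite κ
  obtain ⟨s, r, hrs⟩ := h
  let φ (k : κ) : Module.End A F :=
    r ∘ₗ LinearMap.single A (fun k => N k) k ∘ₗ LinearMap.proj k ∘ₗ s
  have hsum : ∑ k, φ k = 1 := by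
    refine LinearMap.ext fun x => ?_
    rw [LinearMap.sum_apply]
    exact ((map_sum r _ _).symm.trans (congrArg r (Finset.univ_sum_single (s x)))).trans
      (LinearMap.congr_fun hrs x)
  obtain ⟨k, -, hk⟩ := IsLocalRing.exists_of_isUnit_sum (hsum ▸ isUnit_one)
  obtain ⟨v, hv⟩ := hk.exists_left_inv
  exact ⟨k, LinearMap.proj k ∘ₗ s, v ∘ₗ r ∘ₗ LinearMap.single A (fun k => N k) k, hv⟩

lemma nonempty_linearEquiv (h : IsSummand F M) (hF : ¬ Subsingleton F) (hM : Indec M) :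
    Nonempty (F ≃ₗ[A] M) := by
  obtain ⟨s, r, hrs⟩ := h
  have hrs' : ∀ x, r (s x) = x := LinearMap.congr_fun hrs
  rcases hM.2 (s ∘ₗ r) (LinearMap.ext fun x => congrArg s (hrs' (r x))) with h | h
  · refine (hF (subsingleton_of_forall_eq 0 fun x => ?_)).elim
    calc x = r (s (r (s x))) := by rw [hrs', hrs']
      _ = 0 := by rw [show s (r (s x)) = 0 from LinearMap.congr_fun h (s x), map_zero]
  · exact ⟨.ofLinearMap s r h hrs⟩

end IsSummand

lemma finite_of_forall_isSummand {ι : Type u} {F : ι → ModuleCat.{u} A}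
    (hindec : ∀ i, Indec (F i)) (hinj : ∀ i j, Nonempty (F i ≃ₗ[A] F j) → i = j)
    [IsNoetherian A M] [IsArtinian A M] (hM : ∀ i, IsSummand (F i) M) : Finite ι := by
  obtain ⟨κ, _, N, hN, ⟨e⟩⟩ := exists_linearEquiv_pi_indec (M := M)
  have hiso (i : ι) : ∃ k, Nonempty (F i ≃ₗ[A] N k) := by
    obtain ⟨s, r, hrs⟩ := hM i
    have hs : Function.Injective s := LinearMap.injective_of_comp_eq_id s r hrs
    have := isNoetherian_of_injective s hs
    have := isArtinian_of_injective s hs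
    have := (hindec i).isLocalRing_end
    obtain ⟨k, hk⟩ := ((hM i).trans (.of_linearEquiv e)).exists_of_pi
    exact ⟨k, hk.nonempty_linearEquiv (hindec i).1 (hN k)⟩
  choose k e using hiso
  refine Finite.of_injective k fun i j hij => hinj i j ?_
  exact ⟨(e i).some ≪≫ₗ (hij ▸ (e j).some.symm)⟩

lemma inAddOf_of_forall_indec {𝒳 : ModuleCat.{u} A → Prop} (h𝒳 : SummandClosed 𝒳)
    (hT : ∀ E, Indec E → 𝒳 E → IsSummand E T) [IsNoetherian A M] [IsArtinian A M] (hM : 𝒳 M) :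
    InAddOf (fun X => X = T) M := by
  obtain ⟨κ, _, N, hN, ⟨e⟩⟩ := exists_linearEquiv_pi_indec (M := M)
  classical
  have hsummand (k : κ) : IsSummand (N k) (ModuleCat.of A (∀ k, N k)) :=
    ⟨LinearMap.single A (fun k => N k) k, LinearMap.proj k,
      LinearMap.proj_comp_single_same A (fun k => N k) k⟩
  have hmem (k : κ) : 𝒳 (N k) := h𝒳 _ M hM ((hsummand k).trans (.of_linearEquiv e.symm))
  obtain ⟨n, ⟨σ⟩⟩ := Finite.exists_equiv_fin κ
  have hpi : IsSummand M (ModuleCat.of A (κ → T)) :=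
    .trans (.of_linearEquiv e) (.pi fun k => hT _ (hN k) (hmem k))
  exact inAddOf_eq_iff.2 ⟨n, hpi.trans (.of_linearEquiv (LinearEquiv.funCongrLeft A T σ.symm))⟩

end KrullSchmidt

section InjectiveCogenerator

variable {A : Type u} [Ring A]

/-- Inside an ambient module, `E` is an essential extension of `S`; stated through elements, it says
that every nonzero element of `E` has a nonzero multiple in `S`. -/
def IsEssentialOver {Q : Type u} [AddCommGroup Q] [Module A Q] (S E : Submodule A Q) : Prop :=
  S ≤ E ∧ ∀ x ∈ E, x ≠ 0 → ∃ a : A, a • x ∈ S ∧ a • x ≠ 0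

namespace IsEssentialOver

variable {Q : Type u} [AddCommGroup Q] [Module A Q] {S E K : Submodule A Q}

lemma exists_maximal (S : Submodule A Q) : ∃ E, Maximal (IsEssentialOver S) E := by
  have hchain : ∀ c ⊆ {E | IsEssentialOver S E}, IsChain (· ≤ ·) c → ∀ E ∈ c,
      ∃ ub ∈ {E | IsEssentialOver S E}, ∀ z ∈ c, z ≤ ub := by
    refine fun c hc hchain E hE => ⟨sSup c, ⟨(hc hE).1.trans (le_sSup hE), fun x hx hx0 => ?_⟩,
      fun z hz => le_sSup hz⟩
    obtain ⟨E', hE', hx'⟩ := (Submodule.mem_sSup_of_directed ⟨E, hE⟩ hchain.directedOn).1 hx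
    exact (hc hE').2 x hx' hx0
  have hself : IsEssentialOver S S :=
    ⟨le_rfl, fun x hx hx0 => ⟨1, by rwa [one_smul], by rwa [one_smul]⟩⟩
  obtain ⟨E, -, hE⟩ := zorn_le_nonempty₀ _ hchain S hself
  exact ⟨E, hE⟩

lemma exists_smul_mem_of_maximal_disjoint (hK : Maximal (Disjoint · E) K) (hE : IsEssentialOver S E)
    {q : Q} (hq : q ∉ K) : ∃ a : A, ∃ k ∈ K, k + a • q ∈ S ∧ k + a • q ≠ 0 := by
  have hnot : ¬ Disjoint (K ⊔ Submodule.span A {q}) E := fun h =>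
    hq (hK.le_of_ge h le_sup_left
      (le_sup_right (a := K) (Submodule.mem_span_singleton_self q)))
  simp only [Submodule.disjoint_def, not_forall] at hnot
  obtain ⟨e, heK, heE, he0⟩ := hnot
  obtain ⟨t, ht, ht0⟩ := hE.2 e heE he0
  obtain ⟨k, hk, y, hy, rfl⟩ := Submodule.mem_sup.1 heK
  obtain ⟨a, rfl⟩ := Submodule.mem_span_singleton.1 hy
  rw [smul_add, ← mul_smul] at ht ht0
  exact ⟨t * a, t • k, K.smul_mem t hk, ht, ht0⟩

/-- Choose `K` maximal among the submodules disjoint from `E` and extend the inclusion of `E` along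
the embedding `E → Q ⧸ K`. The image of the extension is essential over `S`, hence equal to `E`. -/
lemma exists_retraction [Module.Injective A Q] (hE : Maximal (IsEssentialOver S) E) :
    ∃ p : Q →ₗ[A] E, p ∘ₗ E.subtype = LinearMap.id := by
  obtain ⟨K, -, hK⟩ := zorn_le_nonempty₀ {K | Disjoint K E} (fun c hc hchain _ _ =>
    ⟨sSup c, hchain.directedOn.disjoint_sSup_left.2 fun K hK => hc hK, fun z hz => le_sSup hz⟩)
    ⊥ disjoint_bot_left
  have hinj : Function.Injective (K.mkQ ∘ₗ E.subtype) := by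
    rw [← LinearMap.ker_eq_bot, LinearMap.ker_comp, Submodule.ker_mkQ]
    exact Submodule.disjoint_iff_comap_eq_bot.1 hK.prop.symm
  obtain ⟨h, hh⟩ := Module.Injective.out (K.mkQ ∘ₗ E.subtype) hinj E.subtype
  have hE_apply : ∀ x ∈ E, h (K.mkQ x) = x := fun x hx => hh ⟨x, hx⟩
  have hK_apply : ∀ k ∈ K, h (K.mkQ k) = 0 := fun k hk => by
    rw [Submodule.mkQ_apply, (Submodule.Quotient.mk_eq_zero K).2 hk, map_zero]
  have hrange : IsEssentialOver S (LinearMap.range (h ∘ₗ K.mkQ)) := by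
    refine ⟨fun x hx => ⟨x, hE_apply x (hE.prop.1 hx)⟩, ?_⟩
    rintro _ ⟨q, rfl⟩ hq
    obtain ⟨a, k, hk, hS, h0⟩ :=
      hE.prop.exists_smul_mem_of_maximal_disjoint hK fun hqK => hq (hK_apply q hqK)
    have heq : a • (h ∘ₗ K.mkQ) q = k + a • q := by
      rw [← hE_apply _ (hE.prop.1 hS), map_add, map_add, hK_apply k hk, zero_add, map_smul,
        map_smul, LinearMap.comp_apply]
    exact ⟨a, heq ▸ hS, heq ▸ h0⟩
  have hle : LinearMap.range (h ∘ₗ K.mkQ) ≤ E :=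
    hE.le_of_ge hrange fun x hx => ⟨x, hE_apply x hx⟩
  exact ⟨(h ∘ₗ K.mkQ).codRestrict E fun q => hle ⟨q, rfl⟩,
    LinearMap.ext fun x => Subtype.ext (hE_apply x x.2)⟩

lemma injective_of_maximal [Module.Injective A Q] (hE : Maximal (IsEssentialOver S) E) :
    Module.Injective A E := by
  obtain ⟨p, hp⟩ := exists_retraction hE
  refine ⟨fun X Y _ _ _ _ f hf g => ?_⟩
  obtain ⟨φ, hφ⟩ := Module.Injective.out f hf (E.subtype ∘ₗ g)
  exact ⟨p ∘ₗ φ, fun x => (congrArg p (hφ x)).trans (LinearMap.congr_fun hp (g x))⟩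

lemma apply_mem_of_isSimpleModule (hE : IsEssentialOver S E) {M : Type u} [AddCommGroup M]
    [Module A M] [IsSimpleModule A M] (φ : M →ₗ[A] E) (x : M) : (φ x : Q) ∈ S := by
  by_cases hx : (φ x : Q) = 0
  · exact hx ▸ S.zero_mem
  obtain ⟨a, ha, ha0⟩ := hE.2 _ (φ x).2 hx
  rw [← Submodule.coe_smul, ← map_smul] at ha ha0
  have hax : a • x ≠ 0 := fun h => ha0 (by rw [h, map_zero, Submodule.coe_zero])
  obtain ⟨b, hb⟩ := IsSimpleModule.toSpanSingleton_surjective A hax x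
  rw [← hb, LinearMap.toSpanSingleton_apply, map_smul]
  exact S.smul_mem b ha

section Finiteness

variable {R : Type u} [CommRing R] [Algebra R A] [Module R Q] [IsScalarTower R A Q]
  [IsNoetherian R S]

lemma isNoetherian_linearMap_of_isSimpleModule (hE : IsEssentialOver S E) {M : Type u}
    [AddCommGroup M] [Module A M] [IsSimpleModule A M] : IsNoetherian R (M →ₗ[A] E) := by
  have := IsSimpleModule.nontrivial A M
  obtain ⟨x, hx⟩ := exists_ne (0 : M)
  let ev : (M →ₗ[A] E) →ₗ[R] S :=
    { toFun := fun φ => ⟨φ x, hE.apply_mem_of_isSimpleModule φ x⟩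
      map_add' := fun _ _ => rfl
      map_smul' := fun _ _ => rfl }
  refine isNoetherian_of_injective ev fun φ ψ h => LinearMap.ext fun y => ?_
  obtain ⟨a, rfl⟩ := IsSimpleModule.toSpanSingleton_surjective A hx y
  have hφψ : φ x = ψ x := Subtype.ext (congrArg (fun s : S => (s : Q)) h)
  rw [LinearMap.toSpanSingleton_apply, map_smul, map_smul, hφψ]

lemma isNoetherian_linearMap (hE : IsEssentialOver S E) {M : Type u} [AddCommGroup M] [Module A M]
    (hM : IsFiniteLength A M) : IsNoetherian R (M →ₗ[A] E) := by
  induction hM with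
  | of_subsingleton => infer_instance
  | @of_simple_quotient M _ _ N _ _ ih =>
    have := hE.isNoetherian_linearMap_of_isSimpleModule (R := R) (M := M ⧸ N)
    refine isNoetherian_of_range_eq_ker (LinearMap.lcomp R E N.mkQ)
      (LinearMap.lcomp R E N.subtype) (le_antisymm ?_ fun φ hφ => ?_)
    · rintro _ ⟨ψ, rfl⟩
      exact LinearMap.ext fun x =>
        (congrArg ψ ((Submodule.Quotient.mk_eq_zero N).2 x.2)).trans (map_zero ψ)
    · have hN : N ≤ LinearMap.ker φ := fun x hx => LinearMap.congr_fun hφ ⟨x, hx⟩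
      exact ⟨N.liftQ φ hN, N.liftQ_mkQ φ hN⟩

lemma isNoetherian [IsArtinianRing A] (hE : IsEssentialOver S E) : IsNoetherian R E := by
  have := hE.isNoetherian_linearMap (R := R) (M := A)
    (isFiniteLength_iff_isNoetherian_isArtinian.2 ⟨inferInstance, inferInstance⟩)
  exact isNoetherian_of_linearEquiv (LinearMap.ringLmapEquivSelf A R E)

end Finiteness

end IsEssentialOver

lemma exists_linearMap_ne_zero {I : ModuleCat.{u} A} [Module.Injective A I]
    (hI : ∀ S : ModuleCat.{u} A, IsSimpleModule A S → ∃ f : S →ₗ[A] I, Function.Injective f)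
    {M : ModuleCat.{u} A} {m : M} (hm : m ≠ 0) : ∃ φ : M →ₗ[A] I, φ m ≠ 0 := by
  let J := LinearMap.ker (LinearMap.toSpanSingleton A M m)
  have hJ : J ≠ ⊤ := fun h => hm ((one_smul A m).symm.trans (h ▸ Submodule.mem_top : (1 : A) ∈ J))
  obtain ⟨𝔪, h𝔪, hle⟩ := Ideal.exists_le_maximal J hJ
  have := isSimpleModule_iff_isCoatom.2 h𝔪.out
  obtain ⟨f, hf⟩ := hI (ModuleCat.of A (A ⧸ 𝔪)) this
  let span : (A ⧸ J) →ₗ[A] M := J.liftQ (LinearMap.toSpanSingleton A M m) le_rfl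
  have hspan : Function.Injective span :=
    LinearMap.ker_eq_bot.1 (Submodule.ker_liftQ_eq_bot' _ _ rfl)
  obtain ⟨φ, hφ⟩ := Module.Injective.out span hspan (f ∘ₗ Submodule.factor hle)
  refine ⟨φ, fun h0 => h𝔪.ne_top ((Ideal.eq_top_iff_one 𝔪).2 ?_)⟩
  rw [← Submodule.Quotient.mk_eq_zero]
  refine hf (((hφ (J.mkQ 1)).symm.trans ?_).trans (map_zero f).symm)
  exact (congrArg φ (one_smul A m)).trans h0

lemma exists_injective_pi_of_separating {M I : ModuleCat.{u} A} [IsArtinian A M]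
    (h : ∀ m : M, m ≠ 0 → ∃ φ : M →ₗ[A] I, φ m ≠ 0) :
    ∃ (n : ℕ) (f : M →ₗ[A] (Fin n → I)), Function.Injective f := by
  obtain ⟨_, ⟨n, f, rfl⟩, hmin⟩ := IsArtinian.set_has_minimal
    {K | ∃ (n : ℕ) (f : Fin n → M →ₗ[A] I), K = LinearMap.ker (LinearMap.pi f)}
    ⟨_, 0, Fin.elim0, rfl⟩
  refine ⟨n, LinearMap.pi f, LinearMap.ker_eq_bot.1 ((Submodule.eq_bot_iff _).2 fun x hx => ?_)⟩
  by_contra hx0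
  obtain ⟨φ, hφ⟩ := h x hx0
  refine hmin _ ⟨n + 1, Fin.cons φ f, rfl⟩ (lt_of_le_of_ne (fun y hy => ?_) fun he => ?_)
  · exact funext fun i => congrFun (LinearMap.mem_ker.1 hy) i.succ
  · rw [← he] at hx
    exact hφ (congrFun (LinearMap.mem_ker.1 hx) 0)

lemma cogenerates_of_forall_isSimpleModule [IsArtinianRing A] {I : ModuleCat.{u} A}
    [Module.Injective A I]
    (hI : ∀ S : ModuleCat.{u} A, IsSimpleModule A S → ∃ f : S →ₗ[A] I, Function.Injective f) :
    Cogenerates (fun M => Module.Finite A M) I := fun _ _ =>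
  exists_injective_pi_of_separating fun _ => exists_linearMap_ne_zero hI

variable (A) in
theorem exists_finite_injective_cogenerates (R : Type u) [CommRing R] [IsNoetherianRing R]
    [Algebra R A] [Module.Finite R A] [IsArtinianRing A] :
    ∃ I : ModuleCat.{u} A, Module.Finite A I ∧ Module.Injective A I ∧
      Cogenerates (fun M => Module.Finite A M) I := by
  obtain ⟨⟨Q, hQ, i, hi⟩⟩ := EnoughInjectives.presentation
    (ModuleCat.of A (A ⧸ Module.jacobson A A))
  have := (Module.injective_iff_injective_object A Q).2 hQ
  let _ := Module.compHom Q (algebraMap R A)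
  have : IsScalarTower R A Q := .of_algebraMap_smul fun _ _ => rfl
  obtain ⟨E, hE⟩ := IsEssentialOver.exists_maximal (LinearMap.range i.hom)
  have hinj := IsEssentialOver.injective_of_maximal hE
  have hfin : Module.Finite A E := by
    have := Module.Finite.trans (R := R) A (LinearMap.range i.hom)
    have := hE.prop.isNoetherian (R := R)
    exact Module.Finite.of_restrictScalars_finite R A E
  refine ⟨ModuleCat.of A E, hfin, hinj, cogenerates_of_forall_isSimpleModule fun S _ => ?_⟩
  obtain ⟨s, r, hrs⟩ := isSummand_quotient_jacobson_of_isSimpleModule S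
  refine ⟨(i.hom ∘ₗ s).codRestrict E fun x => hE.prop.1 ⟨s x, rfl⟩, fun x y hxy => ?_⟩
  exact LinearMap.injective_of_comp_eq_id s r hrs
    ((ModuleCat.mono_iff_injective i).1 hi (congrArg Subtype.val hxy))

end InjectiveCogenerator

section Tilting

variable {A : Type u} [Ring A] {ι : Type u} {F : ι → ModuleCat.{u} A}

lemma isSummand_directSum (F : ι → ModuleCat.{u} A) (i : ι) :
    IsSummand (F i) (ModuleCat.of A (DirectSum ι fun i => F i)) := by
  classical
  exact ⟨DirectSum.lof A ι (fun i => F i) i, DirectSum.component A ι (fun i => F i) i,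
    LinearMap.ext fun x => DirectSum.component.lof_self A (M := fun i => F i) i x⟩

namespace IsCompleteExtInjFamily

variable [IsArtinianRing A]

lemma inAddOf_directSum (hF : IsCompleteExtInjFamily F) {M : ModuleCat.{u} A}
    (hM : ExtInjInP M) :
    InAddOf (fun X => X = ModuleCat.of A (DirectSum ι fun i => F i)) M := by
  have := hM.1.1
  refine inAddOf_of_forall_indec summandClosed_extInjInP (fun E hE hE' => ?_) hM
  obtain ⟨i, ⟨e⟩⟩ := hF.2.1 E hE hE'
  exact (IsSummand.of_linearEquiv e).trans (isSummand_directSum F i)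

lemma finite (hF : IsCompleteExtInjFamily F) {X : ModuleCat.{u} A} (hX : ExtInjInP X)
    (hcog : Cogenerates InP X) : Finite ι := by
  have := hX.1.1
  refine finite_of_forall_isSummand (M := X) (fun i => (hF.1 i).1) hF.2.2 fun i => ?_
  have := (hF.1 i).2.1.1
  have := (hF.1 i).1.isLocalRing_end
  obtain ⟨n, hn⟩ := hX.exists_isSummand_pi hcog (hF.1 i).2
  obtain ⟨-, h⟩ := hn.exists_of_pi
  exact h

end IsCompleteExtInjFamily

theorem stmt_3_general [IsArtinianRing A] {I : ModuleCat.{u} A} [Module.Finite A I]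
    [Module.Injective A I] (hI : Cogenerates InP I)
    (hcf : ContravariantlyFinite (InP (A := A))) (hF : IsCompleteExtInjFamily F) :
    IsTilting (ModuleCat.of A (DirectSum ι fun i => F i)) := by
  obtain ⟨X, hX, hcog⟩ := hcf.exists_extInjInP_cogenerates hI
  have := hF.finite hX hcog
  have hE : ExtInjInP (ModuleCat.of A (DirectSum ι fun i => F i)) :=
    ExtInjInP.directSum fun i => (hF.1 i).2
  obtain ⟨d, hd⟩ := hcf.exists_hasProjectiveDimensionLT
  refine ⟨hE.1.1, hE.1.2, hE.extVanish hE.1, ?_⟩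
  refine InP.hasAddCoresolution hX hcog (fun _ => hF.inAddOf_directSum) d .of_projective ?_
  intro N hN i hi
  have := hd N hN
  exact HasProjectiveDimensionLT.subsingleton N d (i + 1) (by omega) _

end Tilting

/-- If `𝒫` is contravariantly finite, the direct sum of a complete set of
representatives of the indecomposable Ext-injective modules in `𝒫` is a tilting module. -/
theorem stmt_3 (Λ : Type u) [Ring Λ] (R : Type u) [CommRing R] [IsArtinianRing R]
    [Algebra R Λ] [Module.Finite R Λ]
    (hcf : ContravariantlyFinite (fun M : ModuleCat.{u} Λᵐᵒᵖ => InP M))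
    {ι : Type u} (F : ι → ModuleCat.{u} Λᵐᵒᵖ) (hF : IsCompleteExtInjFamily F) :
    IsTilting (ModuleCat.of Λᵐᵒᵖ (DirectSum ι (fun i => ↥(F i)))) := by
  have := IsArtinianRing.of_finite R Λᵐᵒᵖ
  obtain ⟨I, _, _, hI⟩ := exists_finite_injective_cogenerates Λᵐᵒᵖ R
  exact stmt_3_general (fun M hM => hI M hM.1) hcf hF
end

section
/- Let Λ be an artin algebra, P the class of finitely generated right Λ-modules of finite projective dimension, assumed contravariantly finite. Let I_1, …, I_n be a complete set of non-isomorphic indecomposable injective Λ-modules and f_j : A_j → I_j their minimal right P-approximations. Then the set of indecomposable splitting injective modules in P equals the union over j of the sets of indecomposable direct summands of the A_j. -/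
open CategoryTheory

universe u

/-! If `M` is splitting injective in `𝒳`, the minimal `𝒳`-approximations of the indecomposable
injectives separate the points of `M`, because the indecomposable injectives do. As `M` is artinian
it embeds into a finite direct sum of them; the embedding splits, and since `M` has a local
endomorphism ring it is a summand of a single one. Conversely, let `M` be a summand of a
minimal approximation `f : B → I` and `M ⊆ Y` with `Y ∈ add 𝒳`. Injectivity of `I` and the
approximation property extend `f` on `M` to a map `h : Y → B` over `I`; replacing the identity of
`B` by `h` on the summand `M` gives an endomorphism over `I`, hence an automorphism, and it turns
`h` into a retraction onto `M`. -/

section Lattice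

variable {α : Type*} [CompleteLattice α]

theorem exists_le_maximal_disjoint [IsCompactlyGenerated α] {a b : α} (h : Disjoint a b) :
    ∃ m, a ≤ m ∧ Maximal (Disjoint · b) m := by
  refine zorn_le_nonempty₀ {m | Disjoint m b} (fun c hc hchain _ _ => ?_) a h
  exact ⟨sSup c, hchain.directedOn.disjoint_sSup_left.2 fun _ hm => hc hm, fun _ => le_sSup⟩

theorem exists_finset_inf_eq_sInf [WellFoundedLT α] (s : Set α) :
    ∃ t : Finset α, ↑t ⊆ s ∧ t.inf id = sInf s := by
  obtain ⟨t, hts, ht⟩ := CompleteLattice.WellFoundedGT.isSupFiniteCompact αᵒᵈ s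
  exact ⟨t, hts, ht.symm⟩

end Lattice

section Essential

variable {A : Type*} [Ring A] {M : Type*} [AddCommGroup M] [Module A M]

/-- `S` is an essential (or large) submodule of `M`: it meets every nonzero submodule of `M`
nontrivially. -/
def IsEssential (S : Submodule A M) : Prop :=
  ∀ N : Submodule A M, Disjoint N S → N = ⊥

theorem map_subtype_eq_bot_iff {E : Submodule A M} {N : Submodule A E} :
    N.map E.subtype = ⊥ ↔ N = ⊥ := by
  rw [← Submodule.map_bot E.subtype]
  exact (Submodule.map_injective_of_injective E.injective_subtype).eq_iff

theorem disjoint_map_subtype_iff {E S : Submodule A M} {N : Submodule A E} :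
    Disjoint (N.map E.subtype) S ↔ Disjoint N (S.submoduleOf E) := by
  rw [disjoint_iff, disjoint_iff, Submodule.map_inf_eq_map_inf_comap, map_subtype_eq_bot_iff,
    Submodule.submoduleOf]

theorem isEssential_submoduleOf_of_maximal_disjoint {S E K : Submodule A M} (hSE : S ≤ E)
    (hEK : Disjoint E K) (hK : Maximal (Disjoint · S) K) : IsEssential (S.submoduleOf E) := by
  intro N hN
  have hNE : N.map E.subtype ≤ E := E.map_subtype_le N
  have hNS : Disjoint (N.map E.subtype) S := disjoint_map_subtype_iff.2 hN
  have hKN : Disjoint (K ⊔ N.map E.subtype) S :=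
    hNS.disjoint_sup_left_of_disjoint_sup_right (hEK.symm.mono_right (sup_le hNE hSE))
  have hNK : N.map E.subtype ≤ K := le_sup_right.trans (hK.le_of_ge hKN le_sup_left)
  exact map_subtype_eq_bot_iff.1 (le_bot_iff.1 (hEK hNE hNK))

theorem isEssential_map_mkQ_of_maximal_disjoint {S K : Submodule A M}
    (hK : Maximal (Disjoint · S) K) : IsEssential (S.map K.mkQ) := by
  intro N hN
  have hNS : Disjoint (N.comap K.mkQ) S := by
    refine Submodule.disjoint_def.2 fun x hxN hxS => ?_
    have hx : K.mkQ x = 0 := Submodule.disjoint_def.1 hN _ hxN (Submodule.mem_map_of_mem hxS)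
    exact Submodule.disjoint_def.1 hK.prop x ((Submodule.Quotient.mk_eq_zero K).1 hx) hxS
  have hNK : N.comap K.mkQ ≤ K := hK.le_of_ge hNS (K.le_comap_mkQ N)
  rw [← Submodule.map_comap_eq_of_surjective K.mkQ_surjective N, ← le_bot_iff, ← K.mkQ_map_self]
  exact Submodule.map_mono hNK

theorem IsEssential.le_of_isSemisimpleModule {S : Submodule A M} (hS : IsEssential S)
    (N : Submodule A M) [IsSemisimpleModule A N] : N ≤ S := by
  obtain ⟨C, hC⟩ := exists_isCompl (S.submoduleOf N)
  have hC_bot : C = ⊥ :=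
    map_subtype_eq_bot_iff.1 (hS _ (disjoint_map_subtype_iff.2 hC.symm.disjoint))
  rw [← Submodule.submoduleOf_eq_top, ← hC.sup_eq_top, hC_bot, sup_bot_eq]

theorem IsEssential.mem_of_jacobson_smul_eq_zero [IsSemisimpleRing (A ⧸ Ring.jacobson A)]
    {S : Submodule A M} (hS : IsEssential S) {x : M} (hx : ∀ a ∈ Ring.jacobson A, a • x = 0) :
    x ∈ S := by
  have htors : Module.IsTorsionBySet A (A ∙ x) (Ring.jacobson A) := by
    rintro ⟨_, hy⟩ ⟨a, ha⟩
    obtain ⟨b, rfl⟩ := Submodule.mem_span_singleton.1 hy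
    exact Subtype.ext ((smul_smul a b x).trans (hx _ (Ideal.mul_mem_right b _ ha)))
  have : IsSemisimpleModule A (A ∙ x) := by
    let := htors.module
    exact htors.isSemisimpleModule_iff.1 inferInstance
  exact hS.le_of_isSemisimpleModule _ (Submodule.mem_span_singleton_self x)

end Essential

section Noetherian

variable {A : Type*} [Ring A] {M : Type*} [AddCommGroup M] [Module A M]
  (R : Type*) [CommRing R] [Algebra R A] [Module R M] [IsScalarTower R A M]

-- The kernel of `x ↦ (a • x)ₐ : N → (J • N)ˢ`, for `s` a finite generating set of `J`, lies in `S`.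
theorem isNoetherian_of_pow_smul_eq_bot {J : Ideal A} (hJ : J.FG) (S : Submodule A M)
    [IsNoetherian R S] (hS : ∀ x : M, (∀ a ∈ J, a • x = 0) → x ∈ S) (n : ℕ) (N : Submodule A M)
    (hN : J ^ n • N = ⊥) : IsNoetherian R N := by
  have : SMulCommClass R A M := IsScalarTower.to_smulCommClass
  induction n generalizing N with
  | zero =>
    rw [Submodule.pow_zero, Submodule.one_smul] at hN
    subst hN
    infer_instance
  | succ n ih =>
    have : IsNoetherian R (J • N : Submodule A M) :=
      ih _ (by rw [← Submodule.smul_assoc, smul_eq_mul, ← Submodule.pow_succ, hN])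
    obtain ⟨s, rfl⟩ := hJ
    let g : N →ₗ[R] (s → (Ideal.span (s : Set A) • N : Submodule A M)) :=
      { toFun := fun x a =>
          ⟨(a : A) • (x : M), Submodule.smul_mem_smul (Ideal.subset_span a.2) x.2⟩
        map_add' := fun x y => by ext a; simp
        map_smul' := fun r x => by ext a; exact smul_comm (a : A) r (x : M) }
    have hker : ∀ x : LinearMap.ker g, ((x : N) : M) ∈ S := by
      refine fun x => hS _ fun a ha => ?_
      have hs : Ideal.span (s : Set A) ≤ LinearMap.ker (LinearMap.toSpanSingleton A M x) :=
        Ideal.span_le.2 fun b hb => congrArg Subtype.val (congrFun x.2 ⟨b, hb⟩)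
      exact hs ha
    have : IsNoetherian R (S.restrictScalars R) := ‹IsNoetherian R S›
    have : IsNoetherian R (LinearMap.ker g) :=
      isNoetherian_of_injective
        ((N.subtype.restrictScalars R ∘ₗ (LinearMap.ker g).subtype).codRestrict
          (S.restrictScalars R) hker)
        ((LinearMap.injective_codRestrict_iff hker).2
          (N.injective_subtype.comp (LinearMap.ker g).injective_subtype))
    exact isNoetherian_of_range_eq_ker (LinearMap.ker g).subtype g (Submodule.range_subtype _)

end Noetherian

theorem IsEssential.finite {A : Type*} [Ring A] (R : Type*) [CommRing R] [IsArtinianRing R]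
    [Algebra R A] [Module.Finite R A] {M : Type*} [AddCommGroup M] [Module A M]
    {S : Submodule A M} [Module.Finite A S] (hS : IsEssential S) : Module.Finite A M := by
  have : IsArtinianRing A := .of_finite R A
  let : Module R M := Module.compHom M (algebraMap R A)
  have : IsScalarTower R A M := .of_algebraMap_smul fun _ _ => rfl
  have : Module.Finite R S := .trans A S
  obtain ⟨n, hn⟩ : IsNilpotent (Ring.jacobson A) := IsSemiprimaryRing.isNilpotent
  have : IsNoetherian R (⊤ : Submodule A M) :=
    isNoetherian_of_pow_smul_eq_bot R (IsNoetherian.noetherian (Ring.jacobson A)) S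
      (fun _ => hS.mem_of_jacobson_smul_eq_zero) n ⊤ (by
        rw [hn, Submodule.zero_eq_bot, Submodule.bot_smul])
  have : IsNoetherian R M :=
    isNoetherian_of_surjective ((⊤ : Submodule A M).subtype.restrictScalars R)
      (LinearMap.range_eq_top.2 fun x => ⟨⟨x, trivial⟩, rfl⟩)
  exact .of_restrictScalars_finite R A M

section Summand

variable {A : Type u} [Ring A] {M S : ModuleCat.{u} A}

theorem IsSummand.nonempty_retract (h : IsSummand M S) : Nonempty (Retract M S) := by
  obtain ⟨s, r, hrs⟩ := h
  exact ⟨ModuleCat.ofHom s, ModuleCat.ofHom r, ModuleCat.hom_ext hrs⟩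

theorem IsSummand.pdLE {n : ℕ} (h : IsSummand M S) (hS : pdLE S n) : pdLE M n := by
  obtain ⟨ρ⟩ := h.nonempty_retract
  intro i hi N
  have := hS i hi N
  let ρExt : Retract (ModuleCat.of ℤ (ext M N i)) (ModuleCat.of ℤ (ext S N i)) :=
    ρ.op.map ((Ext ℤ (ModuleCat.{u} A) i).flip.obj N)
  have hinj : Function.Injective ρExt.i :=
    Function.LeftInverse.injective (g := ρExt.r) (ConcreteCategory.congr_hom ρExt.retract)
  exact hinj.subsingleton

theorem IsSummand.inP (h : IsSummand M S) (hS : InP S) : InP M := by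
  obtain ⟨hfin, n, hn⟩ := hS
  refine ⟨?_, n, h.pdLE hn⟩
  obtain ⟨s, r, hrs⟩ := h
  exact .of_surjective r fun x => ⟨s x, LinearMap.congr_fun hrs x⟩

theorem IsSummand.injective (h : IsSummand M S) [Module.Injective A S] : Module.Injective A M where
  out X Y _ _ _ _ f hf g := by
    obtain ⟨s, r, hrs⟩ := h
    obtain ⟨h, hh⟩ := Module.Injective.out f hf (s ∘ₗ g)
    exact ⟨r ∘ₗ h, fun x => (congrArg r (hh x)).trans (LinearMap.congr_fun hrs (g x))⟩

end Summand

section InjectiveHull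

variable {A : Type u} [Ring A]

-- The inclusion `E → Q` extends along `E → Q ⧸ K` to a map whose image is disjoint from `K`, hence
-- equal to `E` by maximality.
theorem injective_of_maximal_disjoint {Q : Type u} [AddCommGroup Q] [Module A Q]
    [Module.Injective A Q] {S E K : Submodule A Q} (hSE : S ≤ E)
    (hK : Maximal (Disjoint · S) K) (hE : Maximal (Disjoint · K) E) : Module.Injective A E := by
  have hmkQ : Function.Injective (K.mkQ ∘ₗ E.subtype) := by
    rw [← LinearMap.ker_eq_bot, LinearMap.ker_comp, Submodule.ker_mkQ,
      ← Submodule.disjoint_iff_comap_eq_bot]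
    exact hE.prop
  obtain ⟨φ, hφ⟩ := Module.Injective.out (K.mkQ ∘ₗ E.subtype) hmkQ E.subtype
  have hφE : ∀ x ∈ E, φ (K.mkQ x) = x := fun x hx => hφ ⟨x, hx⟩
  have hcomap : K.comap φ = ⊥ := by
    refine isEssential_map_mkQ_of_maximal_disjoint hK _ (Submodule.disjoint_def.2 ?_)
    rintro _ hxK ⟨x, hxS, rfl⟩
    rw [Submodule.mem_comap, hφE x (hSE hxS)] at hxK
    rw [Submodule.disjoint_def.1 hK.prop x hxK hxS, map_zero]
  have hdisj : Disjoint (LinearMap.range φ) K := by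
    rw [disjoint_iff, ← Submodule.map_comap_eq, hcomap, Submodule.map_bot]
  have hrange : LinearMap.range φ ≤ E := hE.le_of_ge hdisj fun x hx => ⟨_, hφE x hx⟩
  have hsummand : IsSummand (ModuleCat.of A E) (ModuleCat.of A Q) :=
    ⟨E.subtype, (φ ∘ₗ K.mkQ).codRestrict E fun _ => hrange ⟨_, rfl⟩,
      LinearMap.ext fun x => Subtype.ext (hφE x x.2)⟩
  exact hsummand.injective (S := ModuleCat.of A Q)

theorem exists_injective_isEssential_range (M : ModuleCat.{u} A) :
    ∃ (E : ModuleCat.{u} A) (ι : M →ₗ[A] E),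
      Module.Injective A E ∧ Function.Injective ι ∧ IsEssential (LinearMap.range ι) := by
  obtain ⟨⟨Q, hQ, i, hi⟩⟩ := EnoughInjectives.presentation M
  have : Module.Injective A Q := Module.injective_module_of_injective_object A Q
  let S := LinearMap.range i.hom
  obtain ⟨K, -, hK⟩ := exists_le_maximal_disjoint (disjoint_bot_left : Disjoint ⊥ S)
  obtain ⟨E, hSE, hE⟩ := exists_le_maximal_disjoint hK.prop.symm
  let ι : M →ₗ[A] E := i.hom.codRestrict E fun x => hSE ⟨x, rfl⟩
  refine ⟨ModuleCat.of A E, ι, injective_of_maximal_disjoint hSE hK hE,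
    (LinearMap.injective_codRestrict_iff _).2 ((ModuleCat.mono_iff_injective i).1 hi), ?_⟩
  rw [LinearMap.range_codRestrict]
  exact isEssential_submoduleOf_of_maximal_disjoint hSE hE.prop hK

theorem IsEssential.indec {M : ModuleCat.{u} A} {S : Submodule A M} [IsSimpleModule A S]
    (hS : IsEssential S) : Indec M := by
  have hatom : IsAtom S := isSimpleModule_iff_isAtom.1 inferInstance
  refine ⟨fun _ => hatom.1 (Subsingleton.elim _ _), fun e he => ?_⟩
  have hee : ∀ x, e (e x) = e x := LinearMap.congr_fun he
  rcases hatom.le_iff.1 (inf_le_right : LinearMap.ker e ⊓ S ≤ S) with hker | hker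
  · have hinj : Function.Injective e := LinearMap.ker_eq_bot.1 (hS _ (disjoint_iff.2 hker))
    exact .inr (LinearMap.ext fun x => hinj (hee x))
  · have hrange : Disjoint (LinearMap.range e) S := by
      refine Submodule.disjoint_def.2 ?_
      rintro _ ⟨x, rfl⟩ hx
      rw [← hee]
      exact inf_eq_right.1 hker hx
    exact .inl (LinearMap.range_eq_bot.1 (hS _ hrange))

theorem exists_injective_indec_of_isSimpleModule (R : Type*) [CommRing R] [IsArtinianRing R]
    [Algebra R A] [Module.Finite R A] (S : ModuleCat.{u} A) [IsSimpleModule A S] :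
    ∃ (E : ModuleCat.{u} A) (ι : S →ₗ[A] E), Module.Finite A E ∧ Module.Injective A E ∧
      Indec E ∧ Function.Injective ι := by
  obtain ⟨E, ι, hE, hι, hess⟩ := exists_injective_isEssential_range S
  have : IsSimpleModule A (LinearMap.range ι) := .congr (LinearEquiv.ofInjective ι hι).symm
  exact ⟨E, ι, hess.finite R, hE, hess.indec, hι⟩

theorem exists_injective_indec_apply_ne_zero (R : Type*) [CommRing R] [IsArtinianRing R]
    [Algebra R A] [Module.Finite R A] {M : ModuleCat.{u} A} {x : M} (hx : x ≠ 0) :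
    ∃ E : ModuleCat.{u} A, Module.Finite A E ∧ Module.Injective A E ∧ Indec E ∧
      ∃ g : M →ₗ[A] E, g x ≠ 0 := by
  let x' : A ∙ x := ⟨x, Submodule.mem_span_singleton_self x⟩
  have : Nontrivial (A ∙ x) := ⟨x', 0, fun h => hx (congrArg Subtype.val h)⟩
  obtain ⟨N, hN⟩ := IsCoatomic.exists_coatom (α := Submodule A (A ∙ x))
  have hx'N : x' ∉ N := by
    refine fun hmem => hN.1 (eq_top_iff.2 ?_)
    rintro ⟨_, hy⟩ -
    obtain ⟨a, rfl⟩ := Submodule.mem_span_singleton.1 hy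
    exact N.smul_mem a hmem
  have : IsSimpleModule A (ModuleCat.of A ((A ∙ x) ⧸ N)) := isSimpleModule_iff_isCoatom.2 hN
  obtain ⟨E, ι, hfin, hE, hindec, hι⟩ :=
    exists_injective_indec_of_isSimpleModule R (ModuleCat.of A ((A ∙ x) ⧸ N))
  obtain ⟨g, hg⟩ := Module.Injective.out (A ∙ x).subtype (A ∙ x).injective_subtype (ι ∘ₗ N.mkQ)
  refine ⟨E, hfin, hE, hindec, g, fun hgx => hx'N ?_⟩
  have hιx : ι (N.mkQ x') = 0 := (hg x').symm.trans hgx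
  exact (Submodule.Quotient.mk_eq_zero N).1 ((map_eq_zero_iff ι hι).1 hιx)

end InjectiveHull

section LocalEndomorphismRing

variable {A : Type u} [Ring A] {M : ModuleCat.{u} A}

-- Fitting's lemma: `M = ker eⁿ ⊕ im eⁿ` for large `n`.
theorem Indec.isUnit_or_isNilpotent_s4 [IsNoetherian A M] [IsArtinian A M] (hM : Indec M)
    (e : Module.End A M) : IsUnit e ∨ IsNilpotent e := by
  obtain ⟨n, hcompl, hn⟩ := (e.eventually_isCompl_ker_pow_range_pow.and
    (Filter.eventually_ne_atTop 0)).exists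
  rcases hM.2 _ (Submodule.isIdempotentElem_projection hcompl) with hproj | hproj
  · have hker : LinearMap.ker (e ^ n) = ⊥ := by
      rw [← Submodule.range_projection hcompl, hproj, LinearMap.range_zero]
    have hunit : IsUnit (e ^ n) := (Module.End.isUnit_iff _).2
      (IsArtinian.bijective_of_injective_endomorphism _ (LinearMap.ker_eq_bot.1 hker))
    exact .inl ((isUnit_pow_iff hn).1 hunit)
  · have hrange : LinearMap.range (e ^ n) = ⊥ := by
      rw [← Submodule.ker_projection hcompl, hproj, LinearMap.ker_id]
    exact .inr ⟨n, LinearMap.range_eq_bot.1 hrange⟩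

theorem Indec.isLocalRing_end_s4 [IsNoetherian A M] [IsArtinian A M] (hM : Indec M) :
    IsLocalRing (Module.End A M) := by
  have : Nontrivial M := not_subsingleton_iff_nontrivial.1 hM.1
  exact .of_isUnit_or_isUnit_one_sub_self fun e =>
    (hM.isUnit_or_isNilpotent_s4 e).imp_right IsNilpotent.isUnit_one_sub

theorem IsSummand.exists_of_directSum [IsLocalRing (Module.End A M)] {k : ℕ}
    {F : Fin k → ModuleCat.{u} A}
    (h : IsSummand M (ModuleCat.of A (DirectSum (Fin k) fun i => F i))) :
    ∃ i, IsSummand M (F i) := by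
  obtain ⟨s, r, hrs⟩ := h
  let c : ∀ i, M →ₗ[A] F i := fun i => DirectSum.component A (Fin k) (fun i => F i) i ∘ₗ s
  let d : ∀ i, F i →ₗ[A] M := fun i => r ∘ₗ DirectSum.lof A (Fin k) (fun i => F i) i
  have hsum : ∑ i, d i ∘ₗ c i = LinearMap.id := by
    rw [← hrs]
    ext x
    have hx : ∑ i, DirectSum.lof A (Fin k) (fun i => F i) i (s x i) = s x :=
      DirectSum.sum_univ_of (s x)
    conv_rhs => rw [LinearMap.comp_apply, ← hx, map_sum]
    rw [LinearMap.sum_apply]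
    rfl
  obtain ⟨i, -, u, hu⟩ := IsLocalRing.exists_of_isUnit_sum (R := Module.End A M)
    (s := Finset.univ) (f := fun i => d i ∘ₗ c i) (hsum ▸ isUnit_one)
  refine ⟨i, c i, (↑u⁻¹ : Module.End A M) ∘ₗ d i, ?_⟩
  rw [LinearMap.comp_assoc, ← hu]
  exact u.inv_mul

end LocalEndomorphismRing

section SplittingInjective

variable {A : Type u} [Ring A] {X Y : ModuleCat.{u} A → Prop} {M : ModuleCat.{u} A}

theorem exists_injective_directSum [IsArtinian A M]
    (hsep : ∀ x : M, x ≠ 0 → ∃ B, Y B ∧ ∃ g : M →ₗ[A] B, g x ≠ 0) :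
    ∃ (k : ℕ) (F : Fin k → ModuleCat.{u} A), (∀ i, Y (F i)) ∧
      ∃ ι : M →ₗ[A] DirectSum (Fin k) fun i => F i, Function.Injective ι := by
  obtain ⟨t, hts, ht⟩ := exists_finset_inf_eq_sInf
    {N : Submodule A M | ∃ B, Y B ∧ ∃ g : M →ₗ[A] B, LinearMap.ker g = N}
  have ht_bot : t.inf id = ⊥ := by
    refine ht.trans ((Submodule.eq_bot_iff _).2 fun x hx => ?_)
    by_contra hx0
    obtain ⟨B, hB, g, hg⟩ := hsep x hx0
    exact hg (Submodule.mem_sInf.1 hx _ ⟨B, hB, g, rfl⟩)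
  choose B hB g hg using fun N : t => hts N.2
  let e := t.equivFin.symm
  let c : M →ₗ[A] ∀ i, B (e i) := LinearMap.pi fun i => g (e i)
  have hc : Function.Injective c := by
    rw [← LinearMap.ker_eq_bot, LinearMap.ker_pi, e.iInf_comp (g := fun N => LinearMap.ker (g N)),
      ← ht_bot, Finset.inf_eq_iInf, iInf_subtype']
    exact iInf_congr hg
  let ε := DirectSum.linearEquivFunOnFintype A (Fin t.card) fun i => B (e i)
  exact ⟨t.card, fun i => B (e i), fun i => hB (e i), ε.symm.toLinearMap ∘ₗ c,
    ε.symm.injective.comp hc⟩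

theorem SplittingInjIn.exists_isSummand [IsArtinian A M] [IsLocalRing (Module.End A M)]
    (hM : SplittingInjIn X M) (hYX : ∀ B, Y B → X B)
    (hsep : ∀ x : M, x ≠ 0 → ∃ B, Y B ∧ ∃ g : M →ₗ[A] B, g x ≠ 0) :
    ∃ B, Y B ∧ IsSummand M B := by
  obtain ⟨k, F, hF, ι, hι⟩ := exists_injective_directSum hsep
  obtain ⟨r, hr⟩ := hM (ModuleCat.of A (DirectSum (Fin k) fun i => F i))
    ⟨k, F, fun i => hYX _ (hF i), LinearMap.id, LinearMap.id, rfl⟩ ι hι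
  obtain ⟨i, hi⟩ := IsSummand.exists_of_directSum ⟨ι, r, hr⟩
  exact ⟨F i, hF i, hi⟩

theorem IsRightApprox.exists_lift_of_inAddOf {B I Z : ModuleCat.{u} A} {f : B →ₗ[A] I}
    (hf : IsRightApprox X f) (hZ : InAddOf X Z) (g : Z →ₗ[A] I) :
    ∃ h : Z →ₗ[A] B, f ∘ₗ h = g := by
  obtain ⟨k, F, hF, s, r, hrs⟩ := hZ
  choose h hh using fun i =>
    hf.2 (F i) (hF i) (g ∘ₗ r ∘ₗ DirectSum.lof A (Fin k) (fun i => F i) i)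
  refine ⟨DirectSum.toModule A (Fin k) B h ∘ₗ s, ?_⟩
  have hlift : f ∘ₗ DirectSum.toModule A (Fin k) B h = g ∘ₗ r := by
    refine DirectSum.linearMap_ext A fun i => ?_
    ext x
    simpa using LinearMap.congr_fun (hh i) x
  rw [← LinearMap.comp_assoc, hlift, LinearMap.comp_assoc, hrs, LinearMap.comp_id]

theorem IsMinimalRightApprox.splittingInjIn_of_isSummand {B I : ModuleCat.{u} A}
    [Module.Injective A I] {f : B →ₗ[A] I} (hf : IsMinimalRightApprox X f)
    (hM : IsSummand M B) : SplittingInjIn X M := by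
  obtain ⟨s, r, hrs⟩ := hM
  have hrs_apply : ∀ x, r (s x) = x := LinearMap.congr_fun hrs
  intro Z hZ g hg
  obtain ⟨f', hf'⟩ := Module.Injective.out g hg (f ∘ₗ s)
  obtain ⟨h, hh⟩ := hf.1.exists_lift_of_inAddOf hZ f'
  have hh_apply : ∀ z, f (h z) = f' z := LinearMap.congr_fun hh
  let φ : B →ₗ[A] B := h ∘ₗ g ∘ₗ r + (LinearMap.id - s ∘ₗ r)
  have hφ : f ∘ₗ φ = f := by
    ext b
    simp [φ, hh_apply, hf']
  let ψ := LinearEquiv.ofBijective φ (hf.2 φ hφ)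
  have hψ : ∀ x, ψ (s x) = h (g x) := fun x => by simp [ψ, φ, hrs_apply]
  refine ⟨r ∘ₗ ψ.symm.toLinearMap ∘ₗ h, LinearMap.ext fun x => ?_⟩
  simp [← hψ, hrs_apply]

end SplittingInjective

theorem stmt_4_general {A : Type u} [Ring A] (R : Type*) [CommRing R] [IsArtinianRing R]
    [Algebra R A] [Module.Finite R A] {X : ModuleCat.{u} A → Prop}
    (hXfin : ∀ M, X M → Module.Finite A M) (hXsummand : ∀ M S, IsSummand M S → X S → X M)
    {n : ℕ} {I : Fin n → ModuleCat.{u} A} (hI : IsCompleteIndecInjFamily I)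
    {B : Fin n → ModuleCat.{u} A} {f : ∀ j, B j →ₗ[A] I j}
    (hf : ∀ j, IsMinimalRightApprox X (f j)) {M : ModuleCat.{u} A} (hM : Indec M) :
    (X M ∧ SplittingInjIn X M) ↔ ∃ j, IsSummand M (B j) := by
  constructor
  · rintro ⟨hX, hsplit⟩
    have : IsArtinianRing A := .of_finite R A
    have : Module.Finite A M := hXfin M hX
    have : IsLocalRing (Module.End A M) := hM.isLocalRing_end_s4
    have hsep : ∀ x : M, x ≠ 0 → ∃ C ∈ Set.range B, ∃ g : M →ₗ[A] C, g x ≠ 0 := by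
      intro x hx
      obtain ⟨E, hfin, hinj, hE, g, hg⟩ := exists_injective_indec_apply_ne_zero R hx
      obtain ⟨j, ⟨φ⟩⟩ := hI.2.1 E hfin hinj hE
      obtain ⟨h, hh⟩ := (hf j).1.2 M hX (φ.toLinearMap ∘ₗ g)
      have hφ : f j (h x) = φ (g x) := LinearMap.congr_fun hh x
      exact ⟨B j, ⟨j, rfl⟩, h, fun h0 => hg (by simpa [h0] using hφ.symm)⟩
    simpa using hsplit.exists_isSummand (Set.forall_mem_range.2 fun j => (hf j).1.1) hsep
  · rintro ⟨j, hj⟩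
    have : Module.Injective A (I j) := (hI.1 j).2.1
    exact ⟨hXsummand M (B j) hj (hf j).1.1, (hf j).splittingInjIn_of_isSummand hj⟩

/-- If `𝒫` is contravariantly finite, the indecomposable splitting injectives
in `𝒫` are exactly the indecomposable direct summands of the minimal right
`𝒫`-approximations of the indecomposable injective modules. -/
theorem stmt_4 (Λ : Type u) [Ring Λ] (R : Type u) [CommRing R] [IsArtinianRing R]
    [Algebra R Λ] [Module.Finite R Λ]
    (hcf : ContravariantlyFinite (fun M : ModuleCat.{u} Λᵐᵒᵖ => InP M))
    {n : ℕ} (I : Fin n → ModuleCat.{u} Λᵐᵒᵖ) (hI : IsCompleteIndecInjFamily I)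
    (A : Fin n → ModuleCat.{u} Λᵐᵒᵖ) (f : ∀ j, A j →ₗ[Λᵐᵒᵖ] I j)
    (hf : ∀ j, IsMinimalRightApprox InP (f j)) :
    ∀ M : ModuleCat.{u} Λᵐᵒᵖ, Indec M →
      ((InP M ∧ SplittingInjIn InP M) ↔ ∃ j, IsSummand M (A j)) :=
  fun _ hM => stmt_4_general R (fun _ hM => hM.1) (fun _ _ => IsSummand.inP) hI hf hM
end

section
/- Let Λ be an artin algebra and T a tilting Λ-module. Then for each module M in T^⊥ there exists a short exact sequence 0 → K_0 → T_0 → M → 0 with T_0 in Add T and K_0 in T^⊥. -/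
open CategoryTheory

universe u

/-!
Let `p : T^(Hom(T, M)) → M` be the evaluation map, a right `Add T`-approximation of `M`.
Splitting the coresolution of `Λ` into short exact sequences shows that the cokernel of `Λ → C⁰`
has no extensions by `M ∈ T^⊥`, so every map `Λ → M` factors through `C⁰ ∈ add T`, hence through
`p`; therefore `p` is surjective. As `T` is finitely generated and `Λ` is noetherian, `Ext(T, -)`
commutes with direct sums, so `T^(Hom(T, M))` lies in `T^⊥`; since `Hom(T, p)` is surjective, the
long exact sequence puts `ker p` in `T^⊥`.
-/

section AbelianExt

variable {C : Type*} [Category* C] [Abelian C] [HasExt C]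

lemma subsingleton_ext_of_retract {X X' : C} (h : Retract X X') {Y : C} {n : ℕ}
    (hX' : Subsingleton (Abelian.Ext X' Y n)) : Subsingleton (Abelian.Ext X Y n) := by
  refine subsingleton_of_forall_eq 0 fun x ↦ ?_
  rw [← x.mk₀_id_comp, ← h.retract, ← Abelian.Ext.mk₀_comp_mk₀_assoc,
    hX'.elim ((Abelian.Ext.mk₀ h.r).comp x (zero_add n)) 0, Abelian.Ext.comp_zero]

lemma subsingleton_abelianExt_succ_iff_exists_of_d_comp_eq_zero {X : C}
    (P : ProjectiveResolution X) (Y : C) (n : ℕ) :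
    Subsingleton (Abelian.Ext X Y (n + 1)) ↔ ∀ f : P.complex.X (n + 1) ⟶ Y,
      P.complex.d (n + 2) (n + 1) ≫ f = 0 →
        ∃ g : P.complex.X n ⟶ Y, P.complex.d (n + 1) n ≫ g = f := by
  refine ⟨fun h f hf ↦ (P.extMk_eq_zero_iff f _ rfl hf n rfl).1 (h.elim _ _),
    fun h ↦ subsingleton_of_forall_eq 0 fun x ↦ ?_⟩
  obtain ⟨f, hf, rfl⟩ := P.extMk_surjective x (n + 2) rfl
  exact (P.extMk_eq_zero_iff f _ rfl hf n rfl).2 (h f hf)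

variable {S : ShortComplex C} (hS : S.ShortExact) {Y : C} {n : ℕ}

include hS

lemma subsingleton_ext_X₃_succ_iff (h : Subsingleton (Abelian.Ext S.X₂ Y n))
    (h' : Subsingleton (Abelian.Ext S.X₂ Y (n + 1))) :
    Subsingleton (Abelian.Ext S.X₃ Y (n + 1)) ↔ Subsingleton (Abelian.Ext S.X₁ Y n) := by
  refine ⟨fun h₃ ↦ subsingleton_of_forall_eq 0 fun x ↦ ?_,
    fun h₁ ↦ subsingleton_of_forall_eq 0 fun x ↦ ?_⟩
  · obtain ⟨y, rfl⟩ :=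
      Abelian.Ext.contravariant_sequence_exact₁ hS Y x (add_comm 1 n) (h₃.elim _ _)
    rw [h.elim y 0, Abelian.Ext.comp_zero]
  · obtain ⟨y, rfl⟩ :=
      Abelian.Ext.contravariant_sequence_exact₃ hS Y x (h'.elim _ _) (add_comm 1 n)
    rw [h₁.elim y 0, Abelian.Ext.comp_zero]

lemma exists_extension_of_subsingleton_ext_one (h : Subsingleton (Abelian.Ext S.X₃ Y 1))
    (φ : S.X₁ ⟶ Y) : ∃ ψ : S.X₂ ⟶ Y, S.f ≫ ψ = φ := by
  obtain ⟨y, hy⟩ := Abelian.Ext.contravariant_sequence_exact₁ hS Y (Abelian.Ext.mk₀ φ)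
    (add_zero 1) (h.elim _ _)
  obtain ⟨ψ, rfl⟩ := (Abelian.Ext.mk₀_bijective _ _).surjective y
  rw [Abelian.Ext.mk₀_comp_mk₀] at hy
  exact ⟨ψ, (Abelian.Ext.mk₀_bijective _ _).injective hy⟩

lemma subsingleton_ext_one_of_exists_extension (h : Subsingleton (Abelian.Ext S.X₂ Y 1))
    (hext : ∀ φ : S.X₁ ⟶ Y, ∃ ψ : S.X₂ ⟶ Y, S.f ≫ ψ = φ) :
    Subsingleton (Abelian.Ext S.X₃ Y 1) := by
  refine subsingleton_of_forall_eq 0 fun x ↦ ?_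
  obtain ⟨y, rfl⟩ :=
    Abelian.Ext.contravariant_sequence_exact₃ hS Y x (h.elim _ _) (add_zero 1)
  obtain ⟨φ, rfl⟩ := (Abelian.Ext.mk₀_bijective _ _).surjective y
  obtain ⟨ψ, rfl⟩ := hext φ
  rw [← Abelian.Ext.mk₀_comp_mk₀, hS.extClass_comp_assoc]

lemma subsingleton_ext_X₁_succ_of_surjective
    (hg : ∀ x : Abelian.Ext Y S.X₃ n,
      ∃ y : Abelian.Ext Y S.X₂ n, y.comp (Abelian.Ext.mk₀ S.g) (add_zero n) = x)
    (h : Subsingleton (Abelian.Ext Y S.X₂ (n + 1))) :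
    Subsingleton (Abelian.Ext Y S.X₁ (n + 1)) := by
  refine subsingleton_of_forall_eq 0 fun x ↦ ?_
  obtain ⟨y, rfl⟩ := Abelian.Ext.covariant_sequence_exact₁ Y hS x (h.elim _ _) rfl
  obtain ⟨z, rfl⟩ := hg y
  rw [Abelian.Ext.comp_assoc_of_second_deg_zero, hS.comp_extClass, Abelian.Ext.comp_zero]

end AbelianExt

section ExtVanish

variable {A : Type u} [Ring A]

lemma subsingleton_ext_succ_iff_exists_of_d_comp_eq_zero {M : ModuleCat.{u} A}
    (P : ProjectiveResolution M) (N : ModuleCat.{u} A) (n : ℕ) :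
    Subsingleton (ext M N (n + 1)) ↔ ∀ f : P.complex.X (n + 1) ⟶ N,
      P.complex.d (n + 2) (n + 1) ≫ f = 0 →
        ∃ g : P.complex.X n ⟶ N, P.complex.d (n + 1) n ≫ g = f := by
  rw [← ModuleCat.isZero_iff_subsingleton, (P.isoExt (n + 1) N).isZero_iff,
    ← HomologicalComplex.exactAt_iff_isZero_homology,
    HomologicalComplex.exactAt_iff' _ n (n + 1) (n + 2) (by simp) (by simp),
    ShortComplex.moduleCat_exact_iff]
  rfl

lemma subsingleton_ext_succ_iff_subsingleton_abelianExt {M N : ModuleCat.{u} A} {n : ℕ} :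
    Subsingleton (ext M N (n + 1)) ↔ Subsingleton (Abelian.Ext M N (n + 1)) :=
  (subsingleton_ext_succ_iff_exists_of_d_comp_eq_zero (projectiveResolution M) N n).trans
    (subsingleton_abelianExt_succ_iff_exists_of_d_comp_eq_zero _ N n).symm

lemma extVanish_iff_forall_subsingleton_abelianExt {M N : ModuleCat.{u} A} :
    ExtVanish M N ↔ ∀ k, Subsingleton (Abelian.Ext M N (k + 1)) := by
  simp_rw [← subsingleton_ext_succ_iff_subsingleton_abelianExt]
  refine ⟨fun h k ↦ h _ k.succ_pos, fun h i hi ↦ ?_⟩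
  obtain ⟨k, rfl⟩ := Nat.exists_eq_succ_of_ne_zero hi.ne'
  exact h k

lemma extVanish_of_subsingleton {M : ModuleCat.{u} A} [Subsingleton M] (N : ModuleCat.{u} A) :
    ExtVanish M N :=
  have := (ModuleCat.isZero_iff_subsingleton.2 ‹Subsingleton M›).projective
  extVanish_iff_forall_subsingleton_abelianExt.2 fun _ ↦
    Abelian.Ext.subsingleton_of_projective _ _ _

lemma InAddOf.extVanish {X : ModuleCat.{u} A → Prop} {M N : ModuleCat.{u} A} (hM : InAddOf X M)
    (hX : ∀ Z, X Z → ExtVanish Z N) : ExtVanish M N := by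
  obtain ⟨m, F, hF, s, r, hrs⟩ := hM
  let e : ModuleCat.of A (DirectSum (Fin m) fun i ↦ F i) ≅ ⨁ F :=
    (DirectSum.linearEquivFunOnFintype A (Fin m) fun i ↦ F i).toModuleIso ≪≫
      (ModuleCat.biproductIsoPi F).symm
  let hret : Retract M (ModuleCat.of A (DirectSum (Fin m) fun i ↦ F i)) :=
    ⟨ModuleCat.ofHom s, ModuleCat.ofHom r, ModuleCat.hom_ext hrs⟩
  rw [extVanish_iff_forall_subsingleton_abelianExt]
  intro k
  have hFN (i : Fin m) : Subsingleton (Abelian.Ext (F i) N (k + 1)) :=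
    extVanish_iff_forall_subsingleton_abelianExt.1 (hX _ (hF i)) k
  exact subsingleton_ext_of_retract (hret.trans e.retract)
    (Abelian.Ext.biproductAddEquiv (Limits.biproduct.isBilimit F) N (k + 1)).subsingleton

namespace ShortExact

variable {M₁ M₂ M₃ : ModuleCat.{u} A} {f : M₁ →ₗ[A] M₂} {g : M₂ →ₗ[A] M₃}

lemma shortComplex_shortExact (h : ShortExact f g) :
    (ModuleCat.shortComplexOfCompEqZero f g h.2.1.linearMap_comp_eq_zero).ShortExact :=
  ModuleCat.shortComplex_shortExact _ h.2.1 h.1 h.2.2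

lemma extVanish_left (h : ShortExact f g) {N : ModuleCat.{u} A} (h₂ : ExtVanish M₂ N)
    (h₃ : ExtVanish M₃ N) : ExtVanish M₁ N := by
  rw [extVanish_iff_forall_subsingleton_abelianExt] at h₂ h₃ ⊢
  exact fun k ↦ (subsingleton_ext_X₃_succ_iff h.shortComplex_shortExact (h₂ k) (h₂ (k + 1))).1
    (h₃ (k + 1))

lemma exists_extension (h : ShortExact f g) {N : ModuleCat.{u} A}
    (h₃ : Subsingleton (ext M₃ N 1)) (φ : M₁ →ₗ[A] N) : ∃ ψ : M₂ →ₗ[A] N, ψ ∘ₗ f = φ := by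
  rw [subsingleton_ext_succ_iff_subsingleton_abelianExt] at h₃
  obtain ⟨ψ, hψ⟩ :=
    exists_extension_of_subsingleton_ext_one h.shortComplex_shortExact h₃ (ModuleCat.ofHom φ)
  exact ⟨ψ.hom, congrArg ModuleCat.Hom.hom hψ⟩

end ShortExact

end ExtVanish

section DirectSum

open scoped DirectSum

lemma exists_extension_directSum {A L P ι : Type*} {Y : ι → Type*} [Semiring A]
    [AddCommMonoid L] [Module A L] [Module.Finite A L] [AddCommMonoid P] [Module A P]
    [∀ j, AddCommMonoid (Y j)] [∀ j, Module A (Y j)] (i : L →ₗ[A] P)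
    (h : ∀ j (f : L →ₗ[A] Y j), ∃ g : P →ₗ[A] Y j, g ∘ₗ i = f) (f : L →ₗ[A] ⨁ j, Y j) :
    ∃ g : P →ₗ[A] ⨁ j, Y j, g ∘ₗ i = f := by
  classical
  obtain ⟨S, hS⟩ := (Module.Finite.fg_top : (⊤ : Submodule A L).FG)
  choose g hg using fun j ↦ h j (DirectSum.component A ι Y j ∘ₗ f)
  let J : Finset ι := S.biUnion fun x ↦ (f x).support
  refine ⟨∑ j ∈ J, DirectSum.lof A ι Y j ∘ₗ g j, LinearMap.ext_on hS fun x hx ↦ ?_⟩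
  have hJ : (f x).support ⊆ J := Finset.subset_biUnion_of_mem (fun x ↦ (f x).support) hx
  have hgx (j : ι) : g j (i x) = f x j := LinearMap.congr_fun (hg j) x
  calc (∑ j ∈ J, DirectSum.lof A ι Y j ∘ₗ g j) (i x)
      = ∑ j ∈ J, DirectSum.of Y j (f x j) := by
        simp only [LinearMap.sum_apply, LinearMap.comp_apply, hgx, DirectSum.lof_eq_of]
    _ = ∑ j ∈ (f x).support, DirectSum.of Y j (f x j) :=
        (Finset.sum_subset hJ fun j _ hj ↦ by
          rw [DFinsupp.notMem_support_iff.1 hj, map_zero]).symm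
    _ = f x := DirectSum.sum_support_of (f x)

variable {A : Type u} [Ring A]

lemma subsingleton_ext_succ_directSum [IsNoetherianRing A] {ι : Type u} (Y : ι → ModuleCat.{u} A)
    (k : ℕ) (N : ModuleCat.{u} A) [Module.Finite A N]
    (h : ∀ j, Subsingleton (Abelian.Ext N (Y j) (k + 1))) :
    Subsingleton (Abelian.Ext N (ModuleCat.of A (⨁ j, Y j)) (k + 1)) := by
  obtain ⟨n, p, hp⟩ := Module.Finite.exists_fin' A N
  have hS := LinearMap.shortExact_shortComplexKer hp
  have : Projective p.shortComplexKer.X₂ := ModuleCat.projective_of_free (Pi.basisFun A (Fin n))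
  have hfree (Z : ModuleCat.{u} A) (k : ℕ) :
      Subsingleton (Abelian.Ext p.shortComplexKer.X₂ Z (k + 1)) :=
    Abelian.Ext.subsingleton_of_projective _ _ _
  match k with
  | 0 =>
    have hext (j : ι) (φ : LinearMap.ker p →ₗ[A] Y j) :
        ∃ ψ : (Fin n → A) →ₗ[A] Y j, ψ ∘ₗ (LinearMap.ker p).subtype = φ := by
      obtain ⟨ψ, hψ⟩ := exists_extension_of_subsingleton_ext_one hS (h j) (ModuleCat.ofHom φ)
      exact ⟨ψ.hom, congrArg ModuleCat.Hom.hom hψ⟩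
    refine subsingleton_ext_one_of_exists_extension hS (hfree _ 0) fun φ ↦ ?_
    obtain ⟨ψ, hψ⟩ := exists_extension_directSum (LinearMap.ker p).subtype hext φ.hom
    exact ⟨ModuleCat.ofHom ψ, ModuleCat.hom_ext hψ⟩
  | k + 1 =>
    have hker (j : ι) : Subsingleton (Abelian.Ext p.shortComplexKer.X₁ (Y j) (k + 1)) :=
      (subsingleton_ext_X₃_succ_iff hS (hfree _ k) (hfree _ (k + 1))).1 (h j)
    have : Module.Finite A p.shortComplexKer.X₁ :=
      inferInstanceAs (Module.Finite A (LinearMap.ker p))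
    exact (subsingleton_ext_X₃_succ_iff hS (hfree _ k) (hfree _ (k + 1))).2
      (subsingleton_ext_succ_directSum Y k _ hker)

lemma ExtVanish.directSum [IsNoetherianRing A] {N : ModuleCat.{u} A} [Module.Finite A N]
    {ι : Type u} {Y : ι → ModuleCat.{u} A} (h : ∀ j, ExtVanish N (Y j)) :
    ExtVanish N (ModuleCat.of A (⨁ j, Y j)) := by
  simp only [extVanish_iff_forall_subsingleton_abelianExt] at h ⊢
  exact fun k ↦ subsingleton_ext_succ_directSum Y k N fun j ↦ h j k

end DirectSum

section Coresolution

variable {A : Type u} [Ring A]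

/-- `0 → L → C⁰ → C¹ → ⋯` is exact, with augmentation `f : L → C⁰` and differentials `d`:
a possibly infinite coresolution of `L` by arbitrary modules. -/
structure IsCoresolution {L : ModuleCat.{u} A} {C : ℕ → ModuleCat.{u} A} (f : L →ₗ[A] C 0)
    (d : ∀ i, C i →ₗ[A] C (i + 1)) : Prop where
  injective : Function.Injective f
  exact_augmentation : Function.Exact f (d 0)
  exact (i : ℕ) : Function.Exact (d i) (d (i + 1))

namespace IsCoresolution

variable {L M : ModuleCat.{u} A} {C : ℕ → ModuleCat.{u} A} {f : L →ₗ[A] C 0}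
  {d : ∀ i, C i →ₗ[A] C (i + 1)}

lemma cosyzygy (h : IsCoresolution f d) :
    IsCoresolution (L := ModuleCat.of A (LinearMap.ker (d 1))) (C := fun i ↦ C (i + 1))
      (LinearMap.ker (d 1)).subtype (fun i ↦ d (i + 1)) where
  injective := Subtype.val_injective
  exact_augmentation := LinearMap.exact_subtype_ker_map (d 1)
  exact i := h.exact (i + 1)

lemma shortExact_cosyzygy (h : IsCoresolution f d) :
    ShortExact (M₃ := ModuleCat.of A (LinearMap.ker (d 1))) f
      ((d 0).codRestrict (LinearMap.ker (d 1)) (h.exact 0).apply_apply_eq_zero) := by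
  refine ⟨h.injective, fun x ↦ Subtype.ext_iff.trans (h.exact_augmentation x), fun z ↦ ?_⟩
  obtain ⟨x, hx⟩ := (h.exact 0 z.1).1 z.2
  exact ⟨x, Subtype.ext hx⟩

lemma extVanish (h : IsCoresolution f d) (hC : ∀ i, ExtVanish (C i) M) {m : ℕ}
    (hm : ∀ i, m ≤ i → Subsingleton (C i)) : ExtVanish L M := by
  induction m generalizing L C with
  | zero =>
    have := hm 0 le_rfl
    have := h.injective.subsingleton
    exact extVanish_of_subsingleton M
  | succ m ih =>
    exact h.shortExact_cosyzygy.extVanish_left (hC 0)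
      (ih h.cosyzygy (fun i ↦ hC (i + 1)) fun i hi ↦ hm (i + 1) (by lia))

lemma exists_extension (h : IsCoresolution f d) (hC : ∀ i, ExtVanish (C (i + 1)) M) {m : ℕ}
    (hm : ∀ i, m ≤ i → Subsingleton (C (i + 1))) (φ : L →ₗ[A] M) :
    ∃ ψ : C 0 →ₗ[A] M, ψ ∘ₗ f = φ :=
  h.shortExact_cosyzygy.exists_extension (h.cosyzygy.extVanish hC hm 1 one_pos) φ

end IsCoresolution

lemma HasAddCoresolution.exists_factorization {T L M : ModuleCat.{u} A}
    (hL : HasAddCoresolution T L) (hM : ExtVanish T M) (φ : L →ₗ[A] M) :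
    ∃ (C : ModuleCat.{u} A) (f : L →ₗ[A] C) (g : C →ₗ[A] M),
      InAddOf (fun X ↦ X = T) C ∧ g ∘ₗ f = φ := by
  obtain ⟨C, d, f, hf, hfd, hd, hC, m, hm⟩ := hL
  have hCM (i : ℕ) : ExtVanish (C i) M := (hC i).extVanish fun _ hX ↦ hX ▸ hM
  obtain ⟨g, hg⟩ := (IsCoresolution.mk hf hfd hd).exists_extension (fun i ↦ hCM (i + 1))
    (fun i hi ↦ hm (i + 1) (Nat.le_succ_of_le hi)) φ
  exact ⟨C 0, f, g, hC 0, hg⟩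

end Coresolution

section Approximation

open scoped DirectSum

variable {A : Type u} [Ring A] {T T₀ M : ModuleCat.{u} A}

lemma inAdd_directSum (T : ModuleCat.{u} A) (ι : Type u) :
    InAdd T (ModuleCat.of A (⨁ _ : ι, T)) :=
  ⟨ι, LinearMap.id, LinearMap.id, rfl⟩

lemma inAdd_self (T : ModuleCat.{u} A) : InAdd T T :=
  let e := DirectSum.lid A T PUnit
  ⟨PUnit, e.symm, e, LinearMap.ext e.apply_symm_apply⟩

lemma InAddOf.inAdd (hM : InAddOf (fun X ↦ X = T) M) : InAdd T M := by
  obtain ⟨k, F, hF, s, r, hrs⟩ := hM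
  obtain rfl : F = fun _ ↦ T := funext hF
  let e : (⨁ _ : Fin k, T) ≃ₗ[A] ⨁ _ : ULift.{u} (Fin k), T :=
    DirectSum.lequivCongrLeft A Equiv.ulift.symm
  refine ⟨ULift (Fin k), e.toLinearMap ∘ₗ s, r ∘ₗ e.symm.toLinearMap, LinearMap.ext fun x ↦ ?_⟩
  exact (congrArg r (e.symm_apply_apply (s x))).trans (LinearMap.congr_fun hrs x)

open scoped Classical in
/-- The evaluation map `T^(Hom(T, M)) → M`, whose component at `g : T → M` is `g` itself. -/
noncomputable def evalDirectSum (T M : ModuleCat.{u} A) :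
    ModuleCat.of A (⨁ _ : T →ₗ[A] M, T) →ₗ[A] M :=
  DirectSum.toModule A _ _ id

lemma isRightApprox_evalDirectSum (T M : ModuleCat.{u} A) :
    IsRightApprox (InAdd T) (evalDirectSum T M) := by
  classical
  refine ⟨inAdd_directSum T _, fun Y ⟨ι, s, r, hrs⟩ g ↦ ?_⟩
  let gComponent (i : ι) : T →ₗ[A] M := g ∘ₗ r ∘ₗ DirectSum.lof A ι (fun _ ↦ T) i
  let h : (⨁ _ : ι, T) →ₗ[A] ⨁ _ : T →ₗ[A] M, T :=
    DirectSum.toModule A ι _ fun i ↦ DirectSum.lof A _ (fun _ ↦ T) (gComponent i)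
  have hh : evalDirectSum T M ∘ₗ h = g ∘ₗ r := DirectSum.linearMap_ext A fun i ↦
    LinearMap.ext fun x ↦ by simp [h, gComponent, evalDirectSum]
  exact ⟨h ∘ₗ s, by rw [← LinearMap.comp_assoc, hh, LinearMap.comp_assoc, hrs, LinearMap.comp_id]⟩

lemma IsRightApprox.surjective_of_hasAddCoresolution {p : T₀ →ₗ[A] M}
    (hp : IsRightApprox (InAdd T) p) (hA : HasAddCoresolution T (ModuleCat.of A A))
    (hM : ExtVanish T M) : Function.Surjective p := by
  intro y
  obtain ⟨C, f, g, hC, hgf⟩ := hA.exists_factorization hM (LinearMap.toSpanSingleton A M y)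
  obtain ⟨h, rfl⟩ := hp.2 C hC.inAdd g
  exact ⟨h (f (1 : A)), (LinearMap.congr_fun hgf (1 : A)).trans (one_smul A y)⟩

lemma IsRightApprox.extVanish_ker {X : ModuleCat.{u} A → Prop} {p : T₀ →ₗ[A] M}
    (hp : IsRightApprox X p) (hp' : Function.Surjective p) (hT : X T) (hT₀ : ExtVanish T T₀)
    (hM : ExtVanish T M) : ExtVanish T (ModuleCat.of A (LinearMap.ker p)) := by
  rw [extVanish_iff_forall_subsingleton_abelianExt] at hT₀ hM ⊢
  have hS := LinearMap.shortExact_shortComplexKer hp'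
  intro k
  refine subsingleton_ext_X₁_succ_of_surjective hS (fun x ↦ ?_) (hT₀ k)
  cases k with
  | zero =>
    obtain ⟨g, rfl⟩ := (Abelian.Ext.mk₀_bijective _ _).surjective x
    obtain ⟨h, hph⟩ := hp.2 T hT g.hom
    refine ⟨Abelian.Ext.mk₀ (ModuleCat.ofHom h), ?_⟩
    rw [Abelian.Ext.mk₀_comp_mk₀]
    exact congrArg Abelian.Ext.mk₀ (ModuleCat.hom_ext hph)
  | succ k => exact ⟨0, (hM k).elim _ _⟩

lemma shortExact_subtype_ker {p : T₀ →ₗ[A] M} (hp : Function.Surjective p) :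
    ShortExact (M₁ := ModuleCat.of A (LinearMap.ker p)) (LinearMap.ker p).subtype p :=
  ⟨Subtype.val_injective, LinearMap.exact_subtype_ker_map p, hp⟩

end Approximation

theorem stmt_5_general {A : Type u} [Ring A] [IsNoetherianRing A] {T M : ModuleCat.{u} A}
    [Module.Finite A T] (hTT : ExtVanish T T) (hA : HasAddCoresolution T (ModuleCat.of A A))
    (hM : ExtVanish T M) :
    ∃ (K T₀ : ModuleCat.{u} A) (i : K →ₗ[A] T₀) (p : T₀ →ₗ[A] M),
      InAdd T T₀ ∧ ExtVanish T K ∧ ShortExact i p := by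
  have hp := isRightApprox_evalDirectSum T M
  have hsurj := hp.surjective_of_hasAddCoresolution hA hM
  have hT₀ : ExtVanish T (ModuleCat.of A (DirectSum (T →ₗ[A] M) fun _ ↦ T)) :=
    ExtVanish.directSum fun _ ↦ hTT
  exact ⟨_, _, _, _, hp.1, hp.extVanish_ker hsurj (inAdd_self T) hT₀ hM,
    shortExact_subtype_ker hsurj⟩

/-- For a tilting module `T` and `M ∈ T^⊥` there is a short exact sequence
`0 → K₀ → T₀ → M → 0` with `T₀ ∈ Add T` and `K₀ ∈ T^⊥`. -/
theorem stmt_5 (Λ : Type u) [Ring Λ] (R : Type u) [CommRing R] [IsArtinianRing R]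
    [Algebra R Λ] [Module.Finite R Λ]
    (T : ModuleCat.{u} Λᵐᵒᵖ) (hT : IsTilting T)
    (M : ModuleCat.{u} Λᵐᵒᵖ) (hM : ExtVanish T M) :
    ∃ (K T₀ : ModuleCat.{u} Λᵐᵒᵖ) (i : K →ₗ[Λᵐᵒᵖ] T₀) (p : T₀ →ₗ[Λᵐᵒᵖ] M),
      InAdd T T₀ ∧ ExtVanish T K ∧ ShortExact i p := by
  have : IsNoetherianRing Λᵐᵒᵖ := .of_finite R Λᵐᵒᵖ
  obtain ⟨_, -, hTT, hΛ⟩ := hT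
  exact stmt_5_general hTT hΛ hM
end
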